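/- There exists an absolute constant c ≥ 1 (independent of the dimension and of the bodies) such that for every dimension d ≥ 2, every pair of centered convex bodies C, D ⊆ ℝ^d (i.e., each has centroid at the origin) and every α > 0, one has c^{−d} · N∂_{C°}(D°, α) ≤ N∂_D(C, α) ≤ c^{d} · N∂_{C°}(D°, α), where N∂_D(C,α) denotes the least number of translates of α·D needed to cover the frontier ∂C, and N∂_{C°}(D°,α) the least number of translates of α·C° needed to cover ∂D°. -/

import Mathlib

open Set MeasureTheory Metric
open scoped Pointwise RealInnerProductSpace ENNReal

noncomputable section

abbrev Euc (d : ℕ) := EuclideanSpace ℝ (Fin d)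

/-- A convex body: a compact convex set with nonempty interior. -/
def IsConvexBody {d : ℕ} (K : Set (Euc d)) : Prop :=
  IsCompact K ∧ Convex ℝ K ∧ (interior K).Nonempty

/-- The polar of a set. -/
def polarSet {d : ℕ} (S : Set (Euc d)) : Set (Euc d) :=
  {y | ∀ x ∈ S, ⟪x, y⟫ ≤ 1}

/-- The Hilbert distance with respect to the body `K`. -/
def hilbertDist {d : ℕ} (K : Set (Euc d)) (x y : Euc d) : ℝ :=
  -(1 / 2) * Real.log ((1 - gauge ((fun k => k - x) '' K) (y - x)) *
    (1 - gauge ((fun k => k - y) '' K) (x - y)))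

/-- The Hilbert ball of radius `r` centered at `x`. -/
def hilbertBall {d : ℕ} (K : Set (Euc d)) (x : Euc d) (r : ℝ) : Set (Euc d) :=
  {y ∈ interior K | hilbertDist K x y ≤ r}

/-- The Hilbert covering number of `U` at scale `α` in the geometry induced by `K`. -/
def hilbertCov {d : ℕ} (K U : Set (Euc d)) (α : ℝ) : ℕ :=
  sInf {m : ℕ | ∃ x : Fin m → Euc d, (∀ i, x i ∈ interior K) ∧
    U ⊆ ⋃ i, hilbertBall K (x i) α}

/-- The translative covering number of `U` by translates of `α • D`. -/
def transCov {d : ℕ} (D U : Set (Euc d)) (α : ℝ) : ℕ :=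
  sInf {m : ℕ | ∃ x : Fin m → Euc d, U ⊆ ⋃ i, x i +ᵥ α • D}

/-- The Hilbert `α`-expansion of `G` in `K`. -/
def hilbertExpand {d : ℕ} (K G : Set (Euc d)) (α : ℝ) : Set (Euc d) :=
  {x ∈ interior K | sInf (hilbertDist K x '' G) ≤ α}

/-- The Lebesgue volume of the Euclidean unit ball in `ℝ^d`. -/
def ωd (d : ℕ) : ℝ := (volume (ball (0 : Euc d) 1)).toReal

/-- The Hilbert Finsler unit ball at `y` in the geometry induced by `K`. -/
def finslerBall {d : ℕ} (K : Set (Euc d)) (y : Euc d) : Set (Euc d) :=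
  {v | gauge ((fun k => k - y) '' K) v + gauge ((fun k => k - y) '' K) (-v) ≤ 2}

/-- The Hilbert Holmes–Thompson volume of `U` in the geometry induced by `K`. -/
def volH {d : ℕ} (K U : Set (Euc d)) : ℝ :=
  (1 / ωd d) * ∫ y in U, (volume (polarSet (finslerBall K y))).toReal

/-- The recentered Macbeath region `A(x) := (K ∩ (2x − K)) − x`. -/
def macbeathA {d : ℕ} (K : Set (Euc d)) (x : Euc d) : Set (Euc d) :=
  (fun k => k - x) '' (K ∩ ((fun k => (2 : ℝ) • x - k) '' K))

/-
Write `|K|` for the volume of `K`. A centered body satisfies `|K| |K°| ≤ (C / d)^d`, and a symmetric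
body satisfies the reverse inequality with another constant (Bourgain–Milman); both follow from the
tilted mean map, which sends `y` to the barycenter of the density proportional to `exp ⟨x, y⟩` on a
body. Hence a centered body has `|K - K| ≤ c^d |K ∩ -K|`, and this almost symmetry passes to polars.

For almost symmetric bodies, a maximal separated set on `∂C` is counted by the volume of a shell
around `∂C`, whereas a cover of `∂D°` by translates of `C°` extends along rays to a cover of `D°`
and so bounds `|(C - C) + (D - D)|` through volume products. Both counts involve the largest `r`
with `r C° ⊆ D°`, equivalently `r D ⊆ C`, and the two contributions of `r` cancel.
-/

/-! ### Exponentially tilted measures -/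

section Tilting

universe u v

variable {E : Type u} {F : Type v} [NormedAddCommGroup E] [InnerProductSpace ℝ E]
  [MeasurableSpace E] [NormedAddCommGroup F] [NormedSpace ℝ F] {μ : Measure E}

/-- The exponential family generated by `μ`: the probability measure with density proportional to
`exp ⟪x, y⟫` with respect to `μ`. -/
def expTilt (μ : Measure E) (y : E) : Measure E := μ.tilted fun x => ⟪x, y⟫

/-- The barycenter of `expTilt μ y`, which is the gradient at `y` of the logarithmic Laplace
transform of `μ`. -/
def tiltedMean (μ : Measure E) (y : E) : E := ∫ x, x ∂expTilt μ y

lemma integral_expTilt (g : E → F) (y : E) :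
    ∫ x, g x ∂expTilt μ y = (∫ x, Real.exp ⟪x, y⟫ ∂μ)⁻¹ • ∫ x, Real.exp ⟪x, y⟫ • g x ∂μ := by
  rw [expTilt, integral_tilted, ← integral_smul]
  simp only [div_eq_inv_mul, mul_smul]

lemma ae_norm_le_of_memLp_top {α G : Type*} [MeasurableSpace α] [NormedAddCommGroup G]
    {μ : Measure α} {g : α → G} (hg : MemLp g ∞ μ) : ∃ C, 0 ≤ C ∧ ∀ᵐ x ∂μ, ‖g x‖ ≤ C := by
  refine ⟨(eLpNormEssSup g μ).toReal, ENNReal.toReal_nonneg, ?_⟩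
  have hfin : eLpNormEssSup g μ ≠ ∞ := by simpa using hg.eLpNorm_ne_top
  filter_upwards [ae_le_eLpNormEssSup (f := g) (μ := μ)] with x hx
  simpa using ENNReal.toReal_mono hfin hx

lemma exists_bound_iteratedFDeriv_bilin {D E F G : Type*} [NormedAddCommGroup D] [NormedSpace ℝ D]
    [NormedAddCommGroup E] [NormedSpace ℝ E] [NormedAddCommGroup F] [NormedSpace ℝ F]
    [NormedAddCommGroup G] [NormedSpace ℝ G] (B : E →L[ℝ] F →L[ℝ] G) {f : D → E} {g : D → F}
    {n : ℕ} (hf : ContDiff ℝ n f) (hg : ContDiff ℝ n g)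
    (hbf : ∀ k ≤ n, ∃ C, ∀ y, ‖iteratedFDeriv ℝ k f y‖ ≤ C)
    (hbg : ∀ k ≤ n, ∃ C, ∀ y, ‖iteratedFDeriv ℝ k g y‖ ≤ C) :
    ∃ C, ∀ y, ‖iteratedFDeriv ℝ n (fun y => B (f y) (g y)) y‖ ≤ C := by
  choose! P hP using hbf
  choose! Q hQ using hbg
  refine ⟨‖B‖ * ∑ k ∈ Finset.range (n + 1), n.choose k * P k * Q (n - k), fun y =>
    (B.norm_iteratedFDeriv_le_of_bilinear hf hg y le_rfl).trans ?_⟩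
  gcongr with k hk
  · exact mul_nonneg (Nat.cast_nonneg _)
      ((norm_nonneg _).trans (hP k (Finset.mem_range_succ_iff.1 hk) y))
  · exact hP k (Finset.mem_range_succ_iff.1 hk) y
  · exact hQ (n - k) (n.sub_le k) y

variable [FiniteDimensional ℝ E] [BorelSpace E]

lemma memLp_top_exp_inner (hμ : MemLp id ∞ μ) (y : E) :
    MemLp (fun x => Real.exp ⟪x, y⟫) ∞ μ := by
  obtain ⟨R, -, hR⟩ := ae_norm_le_of_memLp_top hμ
  refine memLp_top_of_bound (by fun_prop) (Real.exp (R * ‖y‖)) ?_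
  filter_upwards [hR] with x hx
  rw [Real.norm_of_nonneg (Real.exp_pos _).le, Real.exp_le_exp]
  exact (real_inner_le_norm x y).trans (by gcongr; exact hx)

lemma memLp_top_innerSL_smulRight (hμ : MemLp id ∞ μ) {g : E → F} (hg : MemLp g ∞ μ) :
    MemLp (fun x => (innerSL ℝ x).smulRight (g x)) ∞ μ := by
  have hinner : MemLp (fun x : E => innerSL ℝ x) ∞ μ :=
    hμ.of_le (by fun_prop) (.of_forall fun x => by simp)
  exact (ContinuousLinearMap.smulRightL ℝ E F).memLp_of_bilin ∞ hinner hg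

variable [IsFiniteMeasure μ]

lemma integrable_exp_inner_smul (hμ : MemLp id ∞ μ) {g : E → F} (hg : MemLp g ∞ μ) (y : E) :
    Integrable (fun x => Real.exp ⟪x, y⟫ • g x) μ :=
  MemLp.integrable (q := ∞) le_top (hg.smul (memLp_top_exp_inner hμ y))

lemma integrable_exp_inner (hμ : MemLp id ∞ μ) (y : E) :
    Integrable (fun x => Real.exp ⟪x, y⟫) μ :=
  (memLp_top_exp_inner hμ y).integrable le_top

lemma hasFDerivAt_integral_exp_inner_smul (hμ : MemLp id ∞ μ) {g : E → F} (hg : MemLp g ∞ μ)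
    (y : E) :
    HasFDerivAt (fun y => ∫ x, Real.exp ⟪x, y⟫ • g x ∂μ)
      (∫ x, Real.exp ⟪x, y⟫ • (innerSL ℝ x).smulRight (g x) ∂μ) y := by
  obtain ⟨R, -, hR⟩ := ae_norm_le_of_memLp_top hμ
  have hDg := memLp_top_innerSL_smulRight hμ hg
  obtain ⟨C, -, hC⟩ := ae_norm_le_of_memLp_top hDg
  refine hasFDerivAt_integral_of_dominated_of_fderiv_le
    (F' := fun z x => Real.exp ⟪x, z⟫ • (innerSL ℝ x).smulRight (g x)) (ball_mem_nhds y one_pos)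
    (.of_forall fun z => (integrable_exp_inner_smul hμ hg z).1)
    (integrable_exp_inner_smul hμ hg y) (integrable_exp_inner_smul hμ hDg y).1
    (bound := fun _ => Real.exp (R * (‖y‖ + 1)) * C) ?_ (integrable_const _) (.of_forall ?_)
  · filter_upwards [hR, hC] with x hxR hxC z hz
    have hzy : ‖z‖ ≤ ‖y‖ + 1 := norm_le_norm_add_const_of_dist_le (mem_ball.1 hz).le
    rw [norm_smul, Real.norm_of_nonneg (Real.exp_pos _).le]
    gcongr
    exact (real_inner_le_norm x z).trans
      (mul_le_mul hxR hzy (norm_nonneg _) ((norm_nonneg _).trans hxR))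
  · intro x z _
    have hexp := ((innerSL ℝ x).hasFDerivAt (x := z)).exp.smul_const (g x)
    refine hexp.congr_fderiv ?_
    ext v
    simp [mul_smul]

lemma integrable_expTilt (hμ : MemLp id ∞ μ) {g : E → F} (hg : MemLp g ∞ μ) (y : E) :
    Integrable g (expTilt μ y) :=
  (integrable_tilted_iff (integrable_exp_inner hμ y) g).2 (integrable_exp_inner_smul hμ hg y)

lemma hasFDerivAt_integral_exp_inner (hμ : MemLp id ∞ μ) (y : E) :
    HasFDerivAt (fun y => ∫ x, Real.exp ⟪x, y⟫ ∂μ)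
      (innerSL ℝ (∫ x, Real.exp ⟪x, y⟫ • x ∂μ)) y := by
  have hone : MemLp (fun _ : E => (1 : ℝ)) ∞ μ := memLp_top_const 1
  have hderiv := hasFDerivAt_integral_exp_inner_smul hμ hone y
  simp only [smul_eq_mul, mul_one] at hderiv
  refine hderiv.congr_fderiv ?_
  ext v
  rw [ContinuousLinearMap.integral_apply
      (integrable_exp_inner_smul hμ (memLp_top_innerSL_smulRight hμ hone) y), innerSL_apply_apply,
    real_inner_comm]
  refine Eq.trans ?_ (integral_inner (integrable_exp_inner_smul hμ hμ y) v)
  simp [real_inner_smul_right, real_inner_comm]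

variable [NeZero μ]

lemma isProbabilityMeasure_expTilt (hμ : MemLp id ∞ μ) (y : E) :
    IsProbabilityMeasure (expTilt μ y) :=
  isProbabilityMeasure_tilted (integrable_exp_inner hμ y)

lemma hasFDerivAt_integral_expTilt (hμ : MemLp id ∞ μ) {g : E → F} (hg : MemLp g ∞ μ) (y : E) :
    HasFDerivAt (fun y => ∫ x, g x ∂expTilt μ y)
      (∫ x, (innerSL ℝ x).smulRight (g x) ∂expTilt μ y
        - (innerSL ℝ (tiltedMean μ y)).smulRight (∫ x, g x ∂expTilt μ y)) y := by
  have hZ : ∫ x, Real.exp ⟪x, y⟫ ∂μ ≠ 0 := (integral_exp_pos (integrable_exp_inner hμ y)).ne'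
  have hderiv := ((hasDerivAt_inv hZ).comp_hasFDerivAt y
    (hasFDerivAt_integral_exp_inner hμ y)).fun_smul (hasFDerivAt_integral_exp_inner_smul hμ hg y)
  simp only [Function.comp_def] at hderiv
  simp only [tiltedMean, integral_expTilt]
  refine hderiv.congr_fderiv ?_
  ext v
  simp only [add_apply, sub_apply, smul_apply, ContinuousLinearMap.smulRight_apply,
    innerSL_apply_apply, real_inner_smul_left, smul_eq_mul, smul_smul]
  rw [sub_eq_add_neg, ← neg_smul]
  congr 2
  field_simp

variable {G : Type u} [NormedAddCommGroup G] [NormedSpace ℝ G]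

lemma fderiv_integral_expTilt (hμ : MemLp id ∞ μ) {g : E → F} (hg : MemLp g ∞ μ) :
    fderiv ℝ (fun y => ∫ x, g x ∂expTilt μ y) = fun y =>
      ∫ x, (innerSL ℝ x).smulRight (g x) ∂expTilt μ y
        - (innerSL ℝ (tiltedMean μ y)).smulRight (∫ x, g x ∂expTilt μ y) :=
  funext fun y => (hasFDerivAt_integral_expTilt hμ hg y).fderiv

theorem contDiff_integral_expTilt (hμ : MemLp id ∞ μ) {g : E → G} (hg : MemLp g ∞ μ) (n : ℕ) :
    ContDiff ℝ n (fun y => ∫ x, g x ∂expTilt μ y) := by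
  induction n generalizing G with
  | zero =>
    exact contDiff_zero.2 (continuous_iff_continuousAt.2 fun y =>
      (hasFDerivAt_integral_expTilt hμ hg y).continuousAt)
  | succ n ih =>
    rw [Nat.cast_succ, contDiff_succ_iff_fderiv]
    refine ⟨fun y => (hasFDerivAt_integral_expTilt hμ hg y).differentiableAt,
      by simp, ?_⟩
    rw [fderiv_integral_expTilt hμ hg]
    exact (ih (memLp_top_innerSL_smulRight hμ hg)).sub
      (((innerSL ℝ).contDiff.comp (ih hμ)).smulRight (ih hg))

/-- Differentiation preserves the family of tilted averages of bounded functions up to products, so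
the bounds propagate to all orders. -/
theorem bounded_iteratedFDeriv_integral_expTilt (hμ : MemLp id ∞ μ) {g : E → G}
    (hg : MemLp g ∞ μ) (n : ℕ) :
    ∃ C, ∀ y, ‖iteratedFDeriv ℝ n (fun y => ∫ x, g x ∂expTilt μ y) y‖ ≤ C := by
  induction n using Nat.strong_induction_on generalizing G with
  | _ n ih =>
  obtain - | n := n
  · obtain ⟨C, -, hC⟩ := ae_norm_le_of_memLp_top hg
    refine ⟨C, fun y => ?_⟩
    have := isProbabilityMeasure_expTilt hμ y
    rw [norm_iteratedFDeriv_zero]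
    have hCy : ∀ᵐ x ∂expTilt μ y, ‖g x‖ ≤ C := (tilted_absolutelyContinuous _ _).ae_le hC
    simpa using norm_integral_le_of_norm_le_const hCy
  · have hDg := memLp_top_innerSL_smulRight hμ hg
    obtain ⟨C, hC⟩ := ih n n.lt_succ_self hDg
    let inn : E →L[ℝ] E →L[ℝ] ℝ := innerSL ℝ
    obtain ⟨C', hC'⟩ := exists_bound_iteratedFDeriv_bilin
      ((ContinuousLinearMap.smulRightL ℝ E G).comp inn)
      (contDiff_integral_expTilt hμ hμ n) (contDiff_integral_expTilt hμ hg n)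
      (fun k hk => ih k (Nat.lt_succ_of_le hk) hμ) (fun k hk => ih k (Nat.lt_succ_of_le hk) hg)
    refine ⟨C + C', fun y => ?_⟩
    rw [← norm_iteratedFDeriv_fderiv, fderiv_integral_expTilt hμ hg]
    refine (congrArg norm (iteratedFDeriv_sub_apply
      (contDiff_integral_expTilt hμ hDg n).contDiffAt ?_)).le.trans
      (norm_sub_le_of_le (hC y) (hC' y))
    exact (((innerSL ℝ).contDiff.comp (contDiff_integral_expTilt hμ hμ n)).smulRight
      (contDiff_integral_expTilt hμ hg n)).contDiffAt

end Tilting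

/-! ### Covariances of absolutely continuous measures -/

section Covariance

open ProbabilityTheory
open scoped NNReal

lemma exp_integral_le_mul_integral_exp {α : Type*} [MeasurableSpace α] {ν μ : Measure α}
    [IsProbabilityMeasure ν] {M : ℝ≥0} (hνμ : ν ≤ M • μ) {q : α → ℝ} (hq : Integrable q ν)
    (hexp : Integrable (fun x => Real.exp (q x)) μ) :
    Real.exp (∫ x, q x ∂ν) ≤ M * ∫ x, Real.exp (q x) ∂μ := by
  have hexpM : Integrable (fun x => Real.exp (q x)) (M • μ) := hexp.smul_measure_nnreal
  calc Real.exp (∫ x, q x ∂ν) ≤ ∫ x, Real.exp (q x) ∂ν :=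
        convexOn_exp.map_integral_le Real.continuous_exp.continuousOn isClosed_univ
          (.of_forall fun _ => mem_univ _) hq (hexpM.mono_measure hνμ)
    _ ≤ ∫ x, Real.exp (q x) ∂(M • μ) :=
        integral_mono_measure hνμ (.of_forall fun x => (Real.exp_pos _).le) hexpM
    _ = M * ∫ x, Real.exp (q x) ∂μ := integral_smul_nnreal_measure _ M

variable {E : Type*} [NormedAddCommGroup E] [InnerProductSpace ℝ E] [FiniteDimensional ℝ E]
  [MeasurableSpace E] [BorelSpace E]

lemma volume_setOf_inner_eq {v : E} (hv : v ≠ 0) (c : ℝ) : volume {x : E | ⟪v, x⟫ = c} = 0 := by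
  let s : AffineSubspace ℝ E :=
    (AffineSubspace.mk' c (⊥ : Submodule ℝ ℝ)).comap (innerSL ℝ v).toLinearMap.toAffineMap
  have hmem : ∀ x, x ∈ s ↔ ⟪v, x⟫ = c := fun x => by
    simp [s, AffineSubspace.mem_mk', sub_eq_zero]
  have hs : s ≠ ⊤ := by
    intro htop
    have hval : ∀ t : ℝ, ⟪v, t • v⟫ = c := fun t =>
      (hmem _).1 (htop ▸ AffineSubspace.mem_top ℝ E (t • v))
    have hv0 := (hval 1).trans (hval 0).symm
    simp [hv] at hv0
  have hset : {x : E | ⟪v, x⟫ = c} = s := Set.ext fun x => (hmem x).symm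
  rw [hset]
  exact Measure.addHaar_affineSubspace volume s hs

lemma covarianceBilin_self_pos {ν : Measure E} [IsProbabilityMeasure ν] (hν : MemLp id 2 ν)
    (hac : ν ≪ volume) {v : E} (hv : v ≠ 0) : 0 < covarianceBilin ν v v := by
  refine (covarianceBilin_self_nonneg v).lt_of_ne' fun h0 => ?_
  have hlin : MemLp (fun x => ⟪v, x⟫) 2 ν := hν.const_inner v
  rw [covarianceBilin_self hν] at h0
  replace h0 := ae_eq_integral_of_variance_eq_zero hlin h0
  have hnull : ∀ᵐ x ∂ν, ⟪v, x⟫ ≠ ∫ x, ⟪v, x⟫ ∂ν :=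
    hac.ae_le (compl_mem_ae_iff.2 (volume_setOf_inner_eq hv _))
  obtain ⟨x, hx, hx'⟩ := (h0.and hnull).exists
  exact hx' hx

lemma integral_exp_neg_sum_inner_sq {ι : Type*} [Fintype ι] (b : OrthonormalBasis ι ℝ E)
    (l : ι → ℝ) (m : E) :
    ∫ x, Real.exp (-∑ i, l i * ⟪b i, x - m⟫ ^ 2) = ∏ i, √(Real.pi / l i) := by
  calc ∫ x, Real.exp (-∑ i, l i * ⟪b i, x - m⟫ ^ 2)
      = ∫ x, Real.exp (-∑ i, l i * ⟪b i, x⟫ ^ 2) :=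
        integral_sub_right_eq_self (fun x => Real.exp (-∑ i, l i * ⟪b i, x⟫ ^ 2)) m
    _ = ∫ x : EuclideanSpace ℝ ι, Real.exp (-∑ i, l i * x i ^ 2) := by
        rw [← MeasurePreserving.integral_comp' (f := b.measurableEquiv) b.measurePreserving_repr]
        simp [OrthonormalBasis.measurableEquiv, b.repr_apply_apply]
    _ = ∫ x : ι → ℝ, ∏ i, Real.exp (-l i * x i ^ 2) := by
        rw [← (PiLp.volume_preserving_toLp ι).integral_comp'
          (f := MeasurableEquiv.toLp 2 (ι → ℝ))]
        simp [← Real.exp_sum, ← Finset.sum_neg_distrib]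
    _ = ∏ i, √(Real.pi / l i) := by
        rw [integral_fintype_prod_volume_eq_prod fun i (t : ℝ) => Real.exp (-l i * t ^ 2)]
        simp only [integral_gaussian]

/-- Jensen's inequality applied to the Gaussian with the same mean and variances as `ν`. -/
lemma exp_neg_card_div_two_le_mul_prod_sqrt {ν : Measure E} [IsProbabilityMeasure ν]
    (hν : MemLp id 2 ν) {M : ℝ≥0} (hM : ν ≤ M • volume) {ι : Type*} [Fintype ι]
    (b : OrthonormalBasis ι ℝ E) :
    Real.exp (-(Fintype.card ι / 2)) ≤
      M * ∏ i, √(2 * Real.pi * covarianceBilin ν (b i) (b i)) := by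
  set l : ι → ℝ := fun i => covarianceBilin ν (b i) (b i)
  have hl0 : ∀ i, 0 < l i := fun i => covarianceBilin_self_pos hν
    ((Measure.absolutelyContinuous_of_le hM).trans Measure.smul_absolutelyContinuous)
    (b.orthonormal.ne_zero i)
  set q : E → ℝ := fun x => -∑ i, (2 * l i)⁻¹ * ⟪b i, x - ν[id]⟫ ^ 2
  have hsq : ∀ i, Integrable (fun x => ⟪b i, x - ν[id]⟫ ^ 2) ν := fun i =>
    MemLp.integrable_sq ((hν.sub (memLp_const _)).const_inner (b i))
  have hqint : Integrable q ν := (integrable_finsetSum _ fun i _ => (hsq i).const_mul _).neg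
  have hq : ∫ x, q x ∂ν = -(Fintype.card ι / 2 : ℝ) := by
    have hterm : ∀ i, ∫ x, (2 * l i)⁻¹ * ⟪b i, x - ν[id]⟫ ^ 2 ∂ν = 1 / 2 := fun i => by
      have hvar := covarianceBilin_apply hν (b i) (b i)
      simp only [← sq] at hvar
      rw [integral_const_mul, ← hvar]
      change (2 * l i)⁻¹ * l i = 1 / 2
      field_simp [(hl0 i).ne']
    rw [integral_neg, integral_finsetSum _ fun i _ => (hsq i).const_mul _]
    simp only [hterm, Finset.sum_const, Finset.card_univ, nsmul_eq_mul]
    ring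
  have hgauss : ∫ x, Real.exp (q x) = ∏ i, √(2 * Real.pi * l i) := by
    rw [integral_exp_neg_sum_inner_sq b]
    congr! 2 with i
    field_simp
  have hexp : Integrable fun x => Real.exp (q x) := not_imp_comm.1 integral_undef <| by
    rw [hgauss]
    exact (Finset.prod_pos fun i _ => Real.sqrt_pos.2 (by have := hl0 i; positivity)).ne'
  rw [← hq, ← hgauss]
  exact exp_integral_le_mul_integral_exp hM hqint hexp

theorem exp_neg_finrank_le_mul_det_of_covarianceBilin {ν : Measure E} [IsProbabilityMeasure ν]
    (hν : MemLp id 2 ν) {M : ℝ≥0} (hM : ν ≤ M • volume) {A : E →ₗ[ℝ] E}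
    (hA : ∀ u v, ⟪A u, v⟫ = covarianceBilin ν u v) :
    Real.exp (-Module.finrank ℝ E) ≤
      M ^ 2 * (2 * Real.pi) ^ Module.finrank ℝ E * LinearMap.det A := by
  have hsymm : A.IsSymmetric := fun u v => by
    rw [hA, real_inner_comm, hA, covarianceBilin_comm]
  set b := hsymm.eigenvectorBasis rfl
  set l := hsymm.eigenvalues rfl
  have hcov : ∀ i, covarianceBilin ν (b i) (b i) = l i := fun i => by
    rw [← hA, hsymm.apply_eigenvectorBasis, inner_smul_left, real_inner_self_eq_norm_sq,
      b.norm_eq_one]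
    simp [l]
  have hl0 : ∀ i, 0 ≤ l i := fun i => hcov i ▸ covarianceBilin_self_nonneg (b i)
  have hdet : LinearMap.det A = ∏ i, l i := by simpa using hsymm.det_eq_prod_eigenvalues rfl
  have hgauss := exp_neg_card_div_two_le_mul_prod_sqrt hν hM b
  simp only [Fintype.card_fin, hcov] at hgauss
  calc Real.exp (-Module.finrank ℝ E)
      = Real.exp (-(Module.finrank ℝ E / 2)) ^ 2 := by
        rw [← Real.exp_nat_mul]
        congr 1
        push_cast
        ring
    _ ≤ (M * ∏ i, √(2 * Real.pi * l i)) ^ 2 := by gcongr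
    _ = M ^ 2 * (2 * Real.pi) ^ Module.finrank ℝ E * LinearMap.det A := by
        have hroot : ∀ i, √(2 * Real.pi * l i) ^ 2 = 2 * Real.pi * l i := fun i =>
          Real.sq_sqrt (by have := hl0 i; positivity)
        simp only [mul_pow, ← Finset.prod_pow, hroot, Finset.prod_mul_distrib, hdet,
          Finset.prod_const, Finset.card_univ, Fintype.card_fin]
        ring

end Covariance

section TiltedMean

open ProbabilityTheory
open scoped NNReal

variable {E : Type*} [NormedAddCommGroup E] [InnerProductSpace ℝ E] [MeasurableSpace E]
  {μ : Measure E}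

lemma expTilt_le_smul {y : E} {M : ℝ≥0}
    (hM : ∀ᵐ x ∂μ, Real.exp ⟪x, y⟫ ≤ M * ∫ x, Real.exp ⟪x, y⟫ ∂μ) : expTilt μ y ≤ M • μ := by
  rw [expTilt, Measure.tilted, ENNReal.smul_def, ← withDensity_const]
  refine withDensity_mono (hM.mono fun x hx => ENNReal.ofReal_le_of_le_toReal ?_)
  exact div_le_of_le_mul₀ (by positivity) M.2 hx

variable [FiniteDimensional ℝ E] [BorelSpace E] [IsFiniteMeasure μ] [NeZero μ]

lemma tiltedMean_mem (hμ : MemLp id ∞ μ) {K : Set E} (hconv : Convex ℝ K) (hclosed : IsClosed K)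
    (hK : ∀ᵐ x ∂μ, x ∈ K) (y : E) : tiltedMean μ y ∈ K := by
  have := isProbabilityMeasure_expTilt hμ y
  exact hconv.integral_mem hclosed ((tilted_absolutelyContinuous _ _).ae_le hK)
    (integrable_expTilt hμ hμ y)

lemma memLp_two_expTilt (hμ : MemLp id ∞ μ) (y : E) : MemLp id 2 (expTilt μ y) := by
  have := isProbabilityMeasure_expTilt hμ y
  obtain ⟨C, -, hC⟩ := ae_norm_le_of_memLp_top hμ
  exact (memLp_top_of_bound (by fun_prop) C
    ((tilted_absolutelyContinuous _ _).ae_le hC)).mono_exponent le_top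

lemma hasFDerivAt_tiltedMean (hμ : MemLp id ∞ μ) (y : E) :
    HasFDerivAt (tiltedMean μ) (fderiv ℝ (tiltedMean μ) y) y :=
  (hasFDerivAt_integral_expTilt hμ hμ y).differentiableAt.hasFDerivAt

lemma contDiff_tiltedMean (hμ : MemLp id ∞ μ) (n : ℕ) : ContDiff ℝ n (tiltedMean μ) :=
  contDiff_integral_expTilt hμ hμ n

theorem inner_fderiv_tiltedMean (hμ : MemLp id ∞ μ) (y u v : E) :
    ⟪fderiv ℝ (tiltedMean μ) y u, v⟫ = covarianceBilin (expTilt μ y) u v := by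
  have := isProbabilityMeasure_expTilt hμ y
  have h2 := memLp_two_expTilt hμ y
  have hint : Integrable (fun x : E => x) (expTilt μ y) := integrable_expTilt hμ hμ y
  have hlin : ∀ w : E, MemLp (fun x => ⟪w, x⟫) 2 (expTilt μ y) := fun w => h2.const_inner w
  have hmean : ∀ w, ⟪w, tiltedMean μ y⟫ = ∫ x, ⟪w, x⟫ ∂expTilt μ y := fun w =>
    (integral_inner hint w).symm
  have hDint := integrable_expTilt hμ (memLp_top_innerSL_smulRight hμ hμ) y
  rw [covarianceBilin_apply_eq_cov h2, covariance_eq_sub (hlin u) (hlin v), ← hmean,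
    ← hmean, show fderiv ℝ (tiltedMean μ) y = _ from
      (hasFDerivAt_integral_expTilt hμ hμ y).fderiv, sub_apply, inner_sub_left,
    ContinuousLinearMap.integral_apply hDint, real_inner_comm v, real_inner_comm v,
    ← integral_inner (hDint.apply_continuousLinearMap u)]
  simp [tiltedMean, real_inner_smul_right, real_inner_comm]

theorem inner_tiltedMean_sub_pos (hμ : MemLp id ∞ μ) (hac : μ ≪ volume) {x y : E} (hxy : x ≠ y) :
    0 < ⟪tiltedMean μ x - tiltedMean μ y, x - y⟫ := by
  set u := x - y with hu
  have hderiv : ∀ t : ℝ, HasDerivAt (fun t : ℝ => ⟪tiltedMean μ (y + t • u), u⟫)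
      ⟪fderiv ℝ (tiltedMean μ) (y + t • u) u, u⟫ t := fun t => by
    have hline : HasDerivAt (fun t : ℝ => y + t • u) u t := by
      simpa using ((hasDerivAt_id t).smul_const u).const_add y
    simpa using ((hasFDerivAt_tiltedMean hμ (y + t • u)).comp_hasDerivAt t hline).inner ℝ
      (hasDerivAt_const t u)
  have hmono : StrictMono fun t : ℝ => ⟪tiltedMean μ (y + t • u), u⟫ :=
    strictMono_of_deriv_pos fun t => by
      have := isProbabilityMeasure_expTilt hμ (y + t • u)
      rw [(hderiv t).deriv, inner_fderiv_tiltedMean hμ]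
      exact covarianceBilin_self_pos (memLp_two_expTilt hμ _)
        ((tilted_absolutelyContinuous _ _).trans hac) (sub_ne_zero.2 hxy)
  have h01 := hmono zero_lt_one
  simp only [zero_smul, add_zero, one_smul, hu, add_sub_cancel] at h01
  rwa [inner_sub_left, sub_pos]

lemma injective_tiltedMean (hμ : MemLp id ∞ μ) (hac : μ ≪ volume) :
    Function.Injective (tiltedMean μ) := fun x y hxy => by
  by_contra hne
  simpa [hxy] using inner_tiltedMean_sub_pos hμ hac hne

lemma exp_neg_finrank_le_mul_det_fderiv_tiltedMean (hμ : MemLp id ∞ μ) (hvol : μ ≤ volume) {y : E}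
    {M : ℝ≥0} (hM : ∀ᵐ x ∂μ, Real.exp ⟪x, y⟫ ≤ M * ∫ x, Real.exp ⟪x, y⟫ ∂μ) :
    Real.exp (-Module.finrank ℝ E) ≤
      M ^ 2 * (2 * Real.pi) ^ Module.finrank ℝ E * (fderiv ℝ (tiltedMean μ) y).det := by
  have := isProbabilityMeasure_expTilt hμ y
  exact exp_neg_finrank_le_mul_det_of_covarianceBilin (memLp_two_expTilt hμ y)
    ((expTilt_le_smul hM).trans (by gcongr)) (inner_fderiv_tiltedMean hμ y)

/-- Jensen's inequality for `x ↦ exp (-⟪x, y⟫)` with respect to `expTilt μ y`. -/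
lemma exp_neg_inner_tiltedMean_le (hμ : MemLp id ∞ μ) (y : E) :
    Real.exp (-⟪tiltedMean μ y, y⟫) ≤ μ.real univ / ∫ x, Real.exp ⟪x, y⟫ ∂μ := by
  have := isProbabilityMeasure_expTilt hμ y
  have hcancel : ∫ x, Real.exp (-⟪x, y⟫) ∂expTilt μ y = μ.real univ / ∫ x, Real.exp ⟪x, y⟫ ∂μ := by
    rw [integral_expTilt, div_eq_inv_mul]
    simp [← Real.exp_add]
  have hint : Integrable (fun x : E => x) (expTilt μ y) := integrable_expTilt hμ hμ y
  have hbdd : MemLp (fun x => Real.exp (-⟪x, y⟫)) ∞ μ := by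
    simpa using memLp_top_exp_inner hμ (-y)
  rw [← hcancel, real_inner_comm, tiltedMean, ← integral_inner hint, ← integral_neg]
  simp only [real_inner_comm _ y]
  exact convexOn_exp.map_integral_le Real.continuous_exp.continuousOn isClosed_univ
    (.of_forall fun _ => mem_univ _) (hint.inner_const y).neg (integrable_expTilt hμ hbdd y)

end TiltedMean

/-! ### Convex bodies and polarity -/

section ConvexBody

variable {d : ℕ} {K : Set (Euc d)}

lemma IsConvexBody.volume_real_pos (hK : IsConvexBody K) : 0 < volume.real K :=
  ENNReal.toReal_pos ((isOpen_interior.measure_pos volume hK.2.2).trans_le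
    (measure_mono interior_subset)).ne' hK.1.measure_lt_top.ne

lemma IsConvexBody.isFiniteMeasure_restrict (hK : IsConvexBody K) :
    IsFiniteMeasure (volume.restrict K) :=
  _root_.MeasureTheory.isFiniteMeasure_restrict.2 hK.1.measure_ne_top

lemma IsConvexBody.neZero_restrict (hK : IsConvexBody K) : NeZero (volume.restrict K) :=
  ⟨fun h => hK.volume_real_pos.ne' (by simp [measureReal_def, Measure.restrict_eq_zero.1 h])⟩

lemma IsConvexBody.memLp_id (hK : IsConvexBody K) : MemLp id ∞ (volume.restrict K) := by
  obtain ⟨R, hR⟩ := hK.1.isBounded.exists_norm_le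
  exact memLp_top_of_bound (by fun_prop) R (ae_restrict_of_forall_mem hK.1.measurableSet hR)

/-- A convex body with the origin in its interior, the setting in which polarity is an
involution. -/
def IsConvexBodyAboutZero (K : Set (Euc d)) : Prop :=
  IsConvexBody K ∧ (0 : Euc d) ∈ interior K

lemma IsConvexBodyAboutZero.zero_mem (hK : IsConvexBodyAboutZero K) : (0 : Euc d) ∈ K :=
  interior_subset hK.2

lemma IsConvexBodyAboutZero.exists_closedBall_subset (hK : IsConvexBodyAboutZero K) :
    ∃ r > 0, closedBall 0 r ⊆ K :=
  nhds_basis_closedBall.mem_iff.1 (mem_interior_iff_mem_nhds.1 hK.2)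

theorem IsConvexBody.isConvexBodyAboutZero (hK : IsConvexBody K) (h0 : ∫ x in K, x = 0) :
    IsConvexBodyAboutZero K := by
  refine ⟨hK, ?_⟩
  have := hK.isFiniteMeasure_restrict
  have := hK.neZero_restrict
  have hint : IntegrableOn (fun x => x) K := hK.memLp_id.integrable le_top
  obtain ⟨x₀, hx₀⟩ := hK.2.2
  obtain ⟨r, hr, hball⟩ := nhds_basis_closedBall.mem_iff.1 (isOpen_interior.mem_nhds hx₀)
  have hrestrict : (volume.restrict K).restrict (closedBall x₀ r) =
      volume.restrict (closedBall x₀ r) := by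
    rw [Measure.restrict_restrict measurableSet_closedBall,
      inter_eq_left.2 (hball.trans interior_subset)]
  have hpos : volume (closedBall x₀ r) ≠ 0 := (measure_closedBall_pos volume x₀ hr).ne'
  have havg : ⨍ x in closedBall x₀ r, x ∂volume.restrict K ∈ interior K := by
    rw [hrestrict]
    exact hball <| (convex_closedBall x₀ r).set_average_mem isClosed_closedBall hpos
      measure_closedBall_lt_top.ne
      (ae_restrict_of_forall_mem measurableSet_closedBall fun x hx => hx)
      (hint.mono_set (hball.trans interior_subset))
  have hmem := hK.2.1.average_mem_interior_of_set (f := fun x => x)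
    (by rwa [← Measure.restrict_eq_zero.ne, hrestrict, Measure.restrict_eq_zero.ne])
    (ae_restrict_of_forall_mem hK.1.measurableSet fun x hx => hx) hint havg
  rwa [average_eq, h0, smul_zero] at hmem

lemma setIntegral_id_eq_zero_of_neg_eq (hK : -K = K) : ∫ x in K, x = 0 := by
  have hneg := (Measure.measurePreserving_neg (volume : Measure (Euc d))).setIntegral_preimage_emb
    (MeasurableEquiv.neg (Euc d)).measurableEmbedding (fun x => x) K
  rw [show Neg.neg ⁻¹' K = K from hK, integral_neg] at hneg
  have : IsAddTorsionFree (Euc d) := .of_module_rat _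
  exact self_eq_neg.1 hneg.symm

lemma isClosed_polarSet (K : Set (Euc d)) : IsClosed (polarSet K) := by
  simp only [polarSet, ofPred_forall]
  exact isClosed_biInter fun x _ => isClosed_le (by fun_prop) continuous_const

lemma convex_polarSet (K : Set (Euc d)) : Convex ℝ (polarSet K) := by
  simp only [polarSet, ofPred_forall]
  exact convex_iInter₂ fun x _ => convex_halfSpace_le (innerSL ℝ x).isLinear 1

lemma polarSet_antitone : Antitone (polarSet : Set (Euc d) → Set (Euc d)) :=
  fun _ _ h _ hy x hx => hy x (h hx)

lemma polarSet_closedBall_subset {r : ℝ} (hr : 0 < r) :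
    polarSet (closedBall (0 : Euc d) r) ⊆ closedBall 0 r⁻¹ := by
  intro y hy
  rw [mem_closedBall_zero_iff]
  rcases eq_or_ne y 0 with rfl | h0
  · simpa using hr.le
  have hn : 0 < ‖y‖ := norm_pos_iff.2 h0
  have hscaled := hy ((r / ‖y‖) • y) <| by
    rw [mem_closedBall_zero_iff, norm_smul, Real.norm_of_nonneg (by positivity),
      div_mul_cancel₀ _ hn.ne']
  rw [real_inner_smul_left, real_inner_self_eq_norm_sq,
    show r / ‖y‖ * ‖y‖ ^ 2 = r * ‖y‖ by field_simp] at hscaled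
  rwa [← one_div, le_div_iff₀' hr]

lemma closedBall_subset_polarSet_closedBall {r : ℝ} (hr : 0 < r) :
    closedBall 0 r⁻¹ ⊆ polarSet (closedBall (0 : Euc d) r) := by
  intro y hy x hx
  rw [mem_closedBall_zero_iff] at hx hy
  calc ⟪x, y⟫ ≤ ‖x‖ * ‖y‖ := real_inner_le_norm x y
    _ ≤ r * r⁻¹ := by gcongr
    _ = 1 := mul_inv_cancel₀ hr.ne'

theorem IsConvexBodyAboutZero.polarSet (hK : IsConvexBodyAboutZero K) :
    IsConvexBodyAboutZero (polarSet K) := by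
  obtain ⟨r, hr, hball⟩ := hK.exists_closedBall_subset
  obtain ⟨R, hR, hbdd⟩ := hK.1.1.isBounded.subset_closedBall_lt 0 0
  have hzero : (0 : Euc d) ∈ interior (_root_.polarSet K) :=
    mem_interior_iff_mem_nhds.2 <| Filter.mem_of_superset (closedBall_mem_nhds 0 (inv_pos.2 hR))
      ((closedBall_subset_polarSet_closedBall hR).trans (polarSet_antitone hbdd))
  refine ⟨⟨?_, convex_polarSet K, ⟨0, hzero⟩⟩, hzero⟩
  exact isCompact_of_isClosed_isBounded (isClosed_polarSet K) <| isBounded_closedBall.subset <|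
    (polarSet_antitone hball).trans (polarSet_closedBall_subset hr)

theorem polarSet_polarSet (hclosed : IsClosed K) (hconv : Convex ℝ K) (h0 : (0 : Euc d) ∈ K) :
    polarSet (polarSet K) = K := by
  refine Subset.antisymm (fun b hb => ?_) fun x hx y hy => real_inner_comm x y ▸ hy x hx
  by_contra hbK
  obtain ⟨f, c, hf, hc⟩ := geometric_hahn_banach_closed_point hconv hclosed hbK
  set u := (InnerProductSpace.toDual ℝ (Euc d)).symm f
  have hfu : ∀ x, f x = ⟪u, x⟫ := fun x => (InnerProductSpace.toDual_symm_apply).symm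
  have hc0 : 0 < c := by simpa using hf 0 h0
  have hu : c⁻¹ • u ∈ polarSet K := fun x hx => by
    rw [real_inner_smul_right, real_inner_comm, ← hfu, inv_mul_le_iff₀ hc0, mul_one]
    exact (hf x hx).le
  have hbu := hb _ hu
  rw [real_inner_smul_left, ← hfu, inv_mul_le_iff₀ hc0, mul_one] at hbu
  exact hbu.not_gt hc

lemma IsConvexBodyAboutZero.polarSet_polarSet (hK : IsConvexBodyAboutZero K) :
    _root_.polarSet (_root_.polarSet K) = K :=
  _root_.polarSet_polarSet hK.1.1.isClosed hK.1.2.1 hK.zero_mem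

end ConvexBody

section Santalo

variable {d : ℕ} {K : Set (Euc d)}

lemma volume_le_setIntegral_exp_inner (hK : IsConvexBody K) (h0 : ∫ x in K, x = 0) (y : Euc d) :
    volume.real K ≤ ∫ x in K, Real.exp ⟪x, y⟫ := by
  have := hK.isFiniteMeasure_restrict
  have hint : IntegrableOn (fun x => x) K := hK.memLp_id.integrable le_top
  have hlin : IntegrableOn (fun x => ⟪y, x⟫) K := hint.const_inner y
  calc volume.real K = ∫ x in K, (⟪y, x⟫ + 1) := by
        rw [integral_add hlin (integrable_const 1), integral_inner hint, h0]
        simp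
    _ ≤ ∫ x in K, Real.exp ⟪x, y⟫ :=
        integral_mono (hlin.add (integrable_const 1)) (integrable_exp_inner hK.memLp_id y)
          fun x => by simpa [real_inner_comm] using Real.add_one_le_exp ⟪y, x⟫

lemma le_det_fderiv_tiltedMean_of_mem_smul_polarSet (hK : IsConvexBody K)
    (h0 : ∫ x in K, x = 0) {y : Euc d} (hy : y ∈ (d : ℝ) • polarSet K) :
    volume.real K ^ 2 ≤
      (2 * Real.pi * Real.exp 3) ^ d * (fderiv ℝ (tiltedMean (volume.restrict K)) y).det := by
  have := hK.isFiniteMeasure_restrict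
  have := hK.neZero_restrict
  have hV := hK.volume_real_pos
  obtain ⟨y, hy, rfl⟩ := hy
  set D := (fderiv ℝ (tiltedMean (volume.restrict K)) ((d : ℝ) • y)).det
  have hdet : Real.exp (-d) ≤ (Real.exp d / volume.real K) ^ 2 * (2 * Real.pi) ^ d * D := by
    have hbound := exp_neg_finrank_le_mul_det_fderiv_tiltedMean hK.memLp_id
      Measure.restrict_le_self (y := (d : ℝ) • y) (M := ⟨Real.exp d / volume.real K, by positivity⟩)
      (ae_restrict_of_forall_mem hK.1.measurableSet fun x hx => ?_)
    · rwa [finrank_euclideanSpace, Fintype.card_fin] at hbound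
    · have hxy : ⟪x, (d : ℝ) • y⟫ ≤ d := by
        rw [real_inner_smul_right]
        exact mul_le_of_le_one_right d.cast_nonneg (hy x hx)
      calc Real.exp ⟪x, (d : ℝ) • y⟫ ≤ Real.exp d := Real.exp_le_exp.2 hxy
        _ = Real.exp d / volume.real K * volume.real K := (div_mul_cancel₀ _ hV.ne').symm
        _ ≤ Real.exp d / volume.real K * ∫ x in K, Real.exp ⟪x, (d : ℝ) • y⟫ := by
            gcongr
            exact volume_le_setIntegral_exp_inner hK h0 _
  have hexp : Real.exp 3 ^ d = Real.exp d ^ 3 := by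
    rw [← Real.exp_nat_mul, ← Real.exp_nat_mul]
    push_cast
    ring_nf
  have hscale := mul_le_mul_of_nonneg_left hdet
    (by positivity : 0 ≤ volume.real K ^ 2 * Real.exp d)
  calc volume.real K ^ 2 = volume.real K ^ 2 * Real.exp d * Real.exp (-d) := by
        rw [mul_assoc, ← Real.exp_add, add_neg_cancel, Real.exp_zero, mul_one]
    _ ≤ _ := hscale
    _ = (2 * Real.pi * Real.exp 3) ^ d * D := by
        rw [mul_pow _ (Real.exp 3), hexp]
        field_simp

lemma mul_volume_smul_polarSet_le (hK : IsConvexBody K) (h0 : ∫ x in K, x = 0) :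
    ENNReal.ofReal (volume.real K ^ 2 / (2 * Real.pi * Real.exp 3) ^ d) *
      volume ((d : ℝ) • polarSet K) ≤ volume K := by
  have := hK.isFiniteMeasure_restrict
  have := hK.neZero_restrict
  set b := tiltedMean (volume.restrict K)
  set S := (d : ℝ) • polarSet K
  have hS : IsCompact S := (hK.isConvexBodyAboutZero h0).polarSet.1.1.smul _
  calc ENNReal.ofReal (volume.real K ^ 2 / (2 * Real.pi * Real.exp 3) ^ d) * volume S
      = ∫⁻ _ in S, ENNReal.ofReal (volume.real K ^ 2 / (2 * Real.pi * Real.exp 3) ^ d) := by simp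
    _ ≤ ∫⁻ y in S, ENNReal.ofReal |(fderiv ℝ b y).det| := by
        refine setLIntegral_mono' hS.measurableSet fun y hy => ENNReal.ofReal_le_ofReal ?_
        refine le_trans ?_ (le_abs_self _)
        rw [div_le_iff₀' (by positivity)]
        exact le_det_fderiv_tiltedMean_of_mem_smul_polarSet hK h0 hy
    _ = volume (b '' S) := lintegral_abs_det_fderiv_eq_addHaar_image volume hS.measurableSet
        (fun y _ => (hasFDerivAt_tiltedMean hK.memLp_id y).hasFDerivWithinAt)
        (injective_tiltedMean hK.memLp_id Measure.absolutelyContinuous_restrict).injOn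
    _ ≤ volume K := measure_mono <| image_subset_iff.2 fun y _ =>
        tiltedMean_mem hK.memLp_id hK.2.1 hK.1.isClosed (ae_restrict_mem hK.1.measurableSet) y

/-- A weak form of the Blaschke–Santaló inequality: the tilted mean maps `d • polarSet K`
injectively into `K`. -/
theorem pow_mul_volume_mul_volume_polarSet_le (hK : IsConvexBody K) (h0 : ∫ x in K, x = 0) :
    d ^ d * volume.real K * volume.real (polarSet K) ≤ (2 * Real.pi * Real.exp 3) ^ d := by
  set c : ℝ := (2 * Real.pi * Real.exp 3) ^ d
  have hc0 : 0 < c := by positivity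
  have hvol : volume.real ((d : ℝ) • polarSet K) = d ^ d * volume.real (polarSet K) := by
    rw [measureReal_def, Measure.addHaar_smul_of_nonneg _ d.cast_nonneg]
    simp [measureReal_def]
  have hreal := ENNReal.toReal_mono hK.1.measure_ne_top (mul_volume_smul_polarSet_le hK h0)
  rw [ENNReal.toReal_mul, ENNReal.toReal_ofReal (by positivity)] at hreal
  change volume.real K ^ 2 / c * volume.real _ ≤ volume.real K at hreal
  rw [hvol, div_mul_eq_mul_div, div_le_iff₀ hc0] at hreal
  refine le_of_mul_le_mul_left ?_ hK.volume_real_pos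
  linarith

end Santalo

/-! ### Derivations and determinants -/

section Determinant

open scoped Matrix

variable {R A n : Type*} [CommRing R] [CommRing A] [Algebra R A] [Fintype n] [DecidableEq n]

lemma derivation_prod {ι : Type*} [DecidableEq ι] (D : Derivation R A A) (s : Finset ι)
    (f : ι → A) : D (∏ i ∈ s, f i) = ∑ i ∈ s, (∏ j ∈ s.erase i, f j) * D (f i) := by
  induction s using Finset.induction_on with
  | empty => simp
  | insert a s ha ih =>
    have herase : ∀ i ∈ s, ∏ j ∈ (insert a s).erase i, f j = f a * ∏ j ∈ s.erase i, f j :=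
      fun i hi => by
        rw [Finset.erase_insert_of_ne (ne_of_mem_of_not_mem hi ha).symm,
          Finset.prod_insert fun h => ha (Finset.mem_of_mem_erase h)]
    rw [Finset.prod_insert ha, D.leibniz, ih, Finset.sum_insert ha, Finset.erase_insert ha,
      smul_eq_mul, smul_eq_mul, Finset.mul_sum, add_comm]
    exact congrArg _ (Finset.sum_congr rfl fun i hi => by rw [herase i hi, mul_assoc])

lemma derivation_det (D : Derivation R A A) (M : Matrix n n A) :
    D M.det = ∑ i, (M.updateRow i fun k => D (M i k)).det := by
  simp only [← Matrix.det_transpose M, ← Matrix.det_transpose (Matrix.updateRow _ _ _)]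
  simp only [Matrix.det_apply', Matrix.transpose_apply, map_sum, D.leibniz, D.map_intCast,
    smul_eq_mul, mul_zero, add_zero, derivation_prod, Finset.mul_sum]
  rw [Finset.sum_comm]
  refine Finset.sum_congr rfl fun i _ => Finset.sum_congr rfl fun σ _ => ?_
  rw [← Finset.mul_prod_erase _ _ (Finset.mem_univ i), Matrix.updateRow_self, mul_comm (D _)]
  congr 2
  exact Finset.prod_congr rfl fun j hj => by rw [Matrix.updateRow_ne (Finset.ne_of_mem_erase hj)]

lemma det_updateRow_eq_sum_adjugate (M : Matrix n n A) (i : n) (b : n → A) :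
    (M.updateRow i b).det = ∑ j, M.adjugate j i * b j := by
  rw [← Matrix.cramer_transpose_apply, Matrix.cramer_eq_adjugate_mulVec,
    ← Matrix.adjugate_transpose]
  rfl

lemma derivation_det_eq_sum_adjugate (D : Derivation R A A) (M : Matrix n n A) :
    D M.det = ∑ i, ∑ j, M.adjugate j i * D (M i j) := by
  simp only [derivation_det, det_updateRow_eq_sum_adjugate]

lemma det_updateRow_updateRow_swap (M : Matrix n n A) {i j : n} (hij : i ≠ j) (u v : n → A) :
    ((M.updateRow i u).updateRow j v).det + ((M.updateRow j u).updateRow i v).det = 0 := by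
  have hswap : (M.updateRow j u).updateRow i v =
      ((M.updateRow i u).updateRow j v).submatrix (Equiv.swap i j) id := by
    ext k l
    rcases eq_or_ne k i with rfl | hki
    · simp
    rcases eq_or_ne k j with rfl | hkj
    · simp [hij, hij.symm]
    · simp [hki, hkj, Equiv.swap_apply_of_ne_of_ne hki hkj]
  rw [hswap, Matrix.det_permute, Equiv.Perm.sign_swap hij]
  simp

theorem sum_derivation_adjugate_eq_zero (D : n → Derivation R A A) (M : Matrix n n A)
    (hM : ∀ i j k, D i (M j k) = D j (M i k)) (k : n) : ∑ j, D j (M.adjugate k j) = 0 := by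
  have hdiag : ∀ j, ((M.updateRow j (Pi.single k 1)).updateRow j
      fun l => D j (M.updateRow j (Pi.single k 1) j l)).det = 0 := fun j => by
    refine Matrix.det_eq_zero_of_row_eq_zero j fun l => ?_
    rcases eq_or_ne l k with rfl | hl
    · simp
    · simp [hl]
  simp only [Matrix.adjugate_apply, derivation_det]
  rw [← Finset.sum_product']
  refine Finset.sum_involution (fun a _ => a.swap) ?_ ?_ (by simp) (by simp)
  · rintro ⟨i, j⟩ -
    rcases eq_or_ne i j with rfl | hij
    · simp only [Prod.swap_prod_mk, hdiag, add_zero]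
    · simp only [Prod.swap_prod_mk, Matrix.updateRow_ne hij, Matrix.updateRow_ne hij.symm,
        fun l => hM i j l]
      exact det_updateRow_updateRow_swap M hij _ _
  · rintro ⟨i, j⟩ - hne heq
    obtain rfl : j = i := congrArg Prod.fst heq
    exact hne (hdiag j)

theorem derivation_det_add_det_mul_eq_sum (del : Derivation R A A) (D : n → Derivation R A A)
    (hD : ∀ i j, ⁅D i, D j⁆ = 0) (hdel : ∀ i, ⁅del, D i⁆ = 0) (p r : n → A)
    (hDp : ∀ i k, D i (p k) = 0) (hdelp : ∀ k, del (p k) = 0) :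
    let M : Matrix n n A := .of fun j k => D j (r k)
    let E := -∑ k, p k * r k
    let F := fun j => ∑ k, M.adjugate k j * del (r k)
    del M.det + M.det * del E = ∑ j, (D j (F j) + F j * D j E) := by
  intro M E F
  have hcommD : ∀ i j a, D i (D j a) = D j (D i a) := fun i j a => by
    rw [← sub_eq_zero, ← Derivation.commutator_apply, hD, Derivation.zero_apply]
  have hcommdel : ∀ j a, del (D j a) = D j (del a) := fun j a => by
    rw [← sub_eq_zero, ← Derivation.commutator_apply, hdel, Derivation.zero_apply]
  have hpiola : ∀ k, ∑ j, D j (M.adjugate k j) = 0 :=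
    sum_derivation_adjugate_eq_zero D M fun i j k => hcommD i j (r k)
  have hdelE : del E = -(del ∘ r ⬝ᵥ p) := by
    simp [E, hdelp, dotProduct, mul_comm]
  have hDE : (fun j => D j E) = -(M *ᵥ p) := by
    funext j
    simp [E, M, hDp, Matrix.mulVec, dotProduct, mul_comm]
  have hF : F = (del ∘ r) ᵥ* M.adjugate := by
    funext j
    simp [F, Matrix.vecMul, dotProduct, mul_comm]
  have hdet : ∑ j, ∑ k, M.adjugate k j * D j (del (r k)) = del M.det := by
    simp only [derivation_det_eq_sum_adjugate, M, Matrix.of_apply, hcommdel]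
  have hmul : ∑ j, F j * D j E = M.det * del E := by
    change F ⬝ᵥ (fun j => D j E) = _
    rw [hDE, dotProduct_neg, hF, Matrix.dotProduct_mulVec, Matrix.vecMul_vecMul,
      Matrix.adjugate_mul, Matrix.vecMul_smul, Matrix.vecMul_one, smul_dotProduct, hdelE,
      smul_eq_mul, mul_neg]
  rw [Finset.sum_add_distrib, hmul, ← hdet]
  congr 1
  simp only [F, map_sum, Derivation.leibniz, smul_eq_mul, Finset.sum_add_distrib, left_eq_add]
  rw [Finset.sum_comm]
  exact Finset.sum_eq_zero fun k _ => by rw [← Finset.mul_sum, hpiola, mul_zero]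

end Determinant

/-! ### Functions of temperate growth -/

section TemperateGrowth

variable {V : Type*} [NormedAddCommGroup V] [NormedSpace ℝ V]

lemma hasTemperateGrowth_fderiv {F : Type*} [NormedAddCommGroup F] [NormedSpace ℝ F] {f : V → F}
    (hf : f.HasTemperateGrowth) : (fderiv ℝ f).HasTemperateGrowth :=
  ⟨hf.1.fderiv_right le_rfl, fun n => by
    simpa only [norm_iteratedFDeriv_fderiv] using hf.2 (n + 1)⟩

variable (V) in
/-- The algebra of complex-valued functions of temperate growth on a real normed space. -/
def temperateGrowth : Subalgebra ℂ (V → ℂ) where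
  carrier := {f | f.HasTemperateGrowth}
  mul_mem' hf hg := hf.mul hg
  add_mem' hf hg := hf.add hg
  algebraMap_mem' c := .const c

lemma differentiableAt_temperateGrowth (f : temperateGrowth V) (z : V) :
    DifferentiableAt ℝ f.1 z :=
  (f.2.1.differentiable (by simp)).differentiableAt

/-- Differentiation in the direction `v`, as a derivation of the algebra of functions of temperate
growth. -/
def lineDerivation (v : V) : Derivation ℂ (temperateGrowth V) (temperateGrowth V) :=
  .mk'
    { toFun f := ⟨fun z => fderiv ℝ f.1 z v,
        (ContinuousLinearMap.apply ℝ ℂ v).hasTemperateGrowth.comp (hasTemperateGrowth_fderiv f.2)⟩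
      map_add' f g := Subtype.ext <| funext fun z => by
        simp [fderiv_add (differentiableAt_temperateGrowth f z)
          (differentiableAt_temperateGrowth g z)]
      map_smul' c f := Subtype.ext <| funext fun z => by
        simp [fderiv_const_smul (differentiableAt_temperateGrowth f z)] }
    fun f g => Subtype.ext <| funext fun z => by
      simp [fderiv_mul (differentiableAt_temperateGrowth f z)
        (differentiableAt_temperateGrowth g z)]

lemma lineDerivation_apply (v : V) (f : temperateGrowth V) (z : V) :
    (lineDerivation v f).1 z = fderiv ℝ f.1 z v := rfl

lemma lineDerivation_comm (u v : V) (f : temperateGrowth V) :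
    lineDerivation u (lineDerivation v f) = lineDerivation v (lineDerivation u f) := by
  refine Subtype.ext <| funext fun z => ?_
  have hfderiv : DifferentiableAt ℝ (fderiv ℝ f.1) z :=
    ((hasTemperateGrowth_fderiv f.2).1.differentiable (by simp)).differentiableAt
  have hsecond : ∀ a b : V, fderiv ℝ (lineDerivation a f).1 z b =
      fderiv ℝ (fderiv ℝ f.1) z b a := fun a b => by
    change fderiv ℝ (fun z => fderiv ℝ f.1 z a) z b = _
    rw [fderiv_clm_apply hfderiv (differentiableAt_const a)]
    simp
  rw [lineDerivation_apply u, lineDerivation_apply v, hsecond, hsecond]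
  exact f.2.1.contDiffAt.isSymmSndFDerivAt
    (by simpa using ENat.LEInfty.out) u v

/-- The derivation `∂_u + i ∂_v` along the fibres of `ℝ × V → ℝ`. -/
def fiberDerivation (u v : V) : Derivation ℂ (temperateGrowth (ℝ × V)) (temperateGrowth (ℝ × V)) :=
  lineDerivation (0, u) + Complex.I • lineDerivation (0, v)

lemma bracket_fiberDerivation (u v u' v' : V) :
    ⁅fiberDerivation u v, fiberDerivation u' v'⁆ = 0 := by
  refine Derivation.ext fun f => ?_
  simp only [Derivation.commutator_apply, fiberDerivation, Derivation.add_apply,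
    Derivation.smul_apply, map_add, Derivation.map_smul, lineDerivation_comm ((0 : ℝ), u'),
    lineDerivation_comm ((0 : ℝ), v'), Derivation.zero_apply, smul_add]
  abel

lemma bracket_lineDerivation_fiberDerivation (w : ℝ × V) (u v : V) :
    ⁅lineDerivation w, fiberDerivation u v⁆ = 0 := by
  refine Derivation.ext fun f => ?_
  simp only [Derivation.commutator_apply, fiberDerivation, Derivation.add_apply,
    Derivation.smul_apply, map_add, Derivation.map_smul, lineDerivation_comm w,
    Derivation.zero_apply, sub_self]

lemma hasFDerivAt_mk_right (f : temperateGrowth (ℝ × V)) (s : ℝ) (z : V) :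
    HasFDerivAt (fun z => f.1 (s, z)) (fderiv ℝ f.1 (s, z) ∘L .inr ℝ ℝ V) z :=
  (differentiableAt_temperateGrowth f (s, z)).hasFDerivAt.comp z (hasFDerivAt_prodMk_right s z)

lemma hasDerivAt_mk_left (f : temperateGrowth (ℝ × V)) (s : ℝ) (z : V) :
    HasDerivAt (fun s => f.1 (s, z)) ((lineDerivation (1, 0) f).1 (s, z)) s :=
  (differentiableAt_temperateGrowth f (s, z)).hasFDerivAt.comp_hasDerivAt s
    ((hasDerivAt_id s).prodMk (hasDerivAt_const s z))

lemma continuous_mul_exp (f E : temperateGrowth V) :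
    Continuous fun w => f.1 w * Complex.exp (E.1 w) :=
  f.2.1.continuous.mul (Complex.continuous_exp.comp E.2.1.continuous)

section Integral

variable [FiniteDimensional ℝ V] [MeasurableSpace V] [BorelSpace V] (μ : Measure V)
  [μ.IsAddHaarMeasure]

lemma integrable_one_add_norm_pow_mul_exp_neg {δ : ℝ} (hδ : 0 < δ) (k : ℕ) :
    Integrable (fun z => (1 + ‖z‖) ^ k * Real.exp (-(δ * ‖z‖))) μ := by
  set m := Module.finrank ℝ V + 1
  have hint : Integrable (fun z : V => (1 + ‖z‖) ^ (-(m : ℝ))) μ :=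
    integrable_one_add_norm (by simp [m])
  refine (hint.const_mul ((k + m).factorial / δ ^ (k + m) * Real.exp δ)).mono'
    (by fun_prop) (.of_forall fun z => ?_)
  have hpos : 0 < 1 + ‖z‖ := by positivity
  have hexp := Real.pow_div_factorial_le_exp _ (mul_pos hδ hpos).le (k + m)
  rw [Real.norm_of_nonneg (by positivity), Real.rpow_neg hpos.le, Real.rpow_natCast,
    ← div_eq_mul_inv, le_div_iff₀ (by positivity), mul_right_comm, ← pow_add,
    Real.exp_neg, ← div_eq_mul_inv, div_le_iff₀ (by positivity), mul_assoc, ← Real.exp_add,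
    div_mul_eq_mul_div, le_div_iff₀ (by positivity)]
  rw [div_le_iff₀ (by positivity), mul_pow] at hexp
  calc (1 + ‖z‖) ^ (k + m) * δ ^ (k + m) = δ ^ (k + m) * (1 + ‖z‖) ^ (k + m) := mul_comm _ _
    _ ≤ _ := hexp
    _ = _ := by ring_nf

/-- Exponents `E(s, z)` whose real part tends to `-∞` at least linearly in `z`, uniformly for
`s ∈ [0, 1]`; they make every integral of `f * exp E` with `f` of temperate growth converge. -/
def IsUniformlyDecaying (E : temperateGrowth (ℝ × V)) : Prop :=
  ∃ δ > 0, ∃ c, ∀ s ∈ Icc (0 : ℝ) 1, ∀ z, (E.1 (s, z)).re ≤ c - δ * ‖z‖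

variable {E : temperateGrowth (ℝ × V)}

lemma IsUniformlyDecaying.exists_integrable_bound (hE : IsUniformlyDecaying E)
    (f : temperateGrowth (ℝ × V)) :
    ∃ B : V → ℝ, Integrable B μ ∧
      ∀ s ∈ Icc (0 : ℝ) 1, ∀ z, ‖f.1 (s, z) * Complex.exp (E.1 (s, z))‖ ≤ B z := by
  obtain ⟨δ, hδ, c, hE⟩ := hE
  obtain ⟨k, C, hC⟩ := f.2.2 0
  have hC0 : 0 ≤ C := by simpa using (norm_nonneg _).trans (hC 0)
  refine ⟨_, (integrable_one_add_norm_pow_mul_exp_neg μ hδ k).const_mul (C * 2 ^ k * Real.exp c),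
    fun s hs z => ?_⟩
  have hnorm : 1 + ‖(s, z)‖ ≤ 2 * (1 + ‖z‖) := by
    have hs' : ‖s‖ ≤ 1 := by rw [Real.norm_of_nonneg hs.1]; exact hs.2
    rw [Prod.norm_mk]
    linarith [max_le_add_of_nonneg (norm_nonneg s) (norm_nonneg z), norm_nonneg z]
  calc ‖f.1 (s, z) * Complex.exp (E.1 (s, z))‖
      = ‖f.1 (s, z)‖ * Real.exp (E.1 (s, z)).re := by rw [norm_mul, Complex.norm_exp]
    _ ≤ C * (2 * (1 + ‖z‖)) ^ k * Real.exp (c - δ * ‖z‖) := by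
        gcongr
        · simpa using (hC (s, z)).trans (by gcongr)
        · exact hE s hs z
    _ = C * 2 ^ k * Real.exp c * ((1 + ‖z‖) ^ k * Real.exp (-(δ * ‖z‖))) := by
        rw [mul_pow, sub_eq_add_neg, Real.exp_add]
        ring

lemma IsUniformlyDecaying.integrable_mul_exp (hE : IsUniformlyDecaying E)
    (f : temperateGrowth (ℝ × V)) {s : ℝ} (hs : s ∈ Icc (0 : ℝ) 1) :
    Integrable (fun z => f.1 (s, z) * Complex.exp (E.1 (s, z))) μ := by
  obtain ⟨B, hB, hbound⟩ := hE.exists_integrable_bound μ f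
  exact hB.mono' ((continuous_mul_exp f E).comp (by fun_prop)).aestronglyMeasurable
    (.of_forall (hbound s hs))

lemma IsUniformlyDecaying.integral_lineDerivation_add_mul_mul_exp (hE : IsUniformlyDecaying E)
    (f : temperateGrowth (ℝ × V)) (v : V) {s : ℝ}
    (hs : s ∈ Icc (0 : ℝ) 1) :
    ∫ z, (lineDerivation (0, v) f + f * lineDerivation (0, v) E).1 (s, z) *
      Complex.exp (E.1 (s, z)) ∂μ = 0 := by
  have hf : ∀ z, fderiv ℝ (fun z => f.1 (s, z)) z v = (lineDerivation (0, v) f).1 (s, z) :=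
    fun z => by simp [(hasFDerivAt_mk_right f s z).fderiv, lineDerivation_apply]
  have hexp : ∀ z, fderiv ℝ (fun z => Complex.exp (E.1 (s, z))) z v =
      Complex.exp (E.1 (s, z)) * (lineDerivation (0, v) E).1 (s, z) :=
    fun z => by simp [(hasFDerivAt_mk_right E s z).cexp.fderiv, lineDerivation_apply]
  have hmul : ∀ z, f.1 (s, z) * (Complex.exp (E.1 (s, z)) * (lineDerivation (0, v) E).1 (s, z)) =
      (f * lineDerivation (0, v) E).1 (s, z) * Complex.exp (E.1 (s, z)) :=
    fun z => by rw [MulMemClass.coe_mul, Pi.mul_apply]; ring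
  have hleft := hE.integrable_mul_exp μ (lineDerivation (0, v) f) hs
  have hright := hE.integrable_mul_exp μ (f * lineDerivation (0, v) E) hs
  have hparts := integral_mul_fderiv_eq_neg_fderiv_mul_of_integrable (μ := μ) (v := v)
    (f := fun z => f.1 (s, z)) (g := fun z => Complex.exp (E.1 (s, z)))
    (by simpa only [hf] using hleft) (by simpa only [hexp, hmul] using hright)
    (hE.integrable_mul_exp μ f hs)
    (fun z _ => (hasFDerivAt_mk_right f s z).differentiableAt)
    (fun z _ => (hasFDerivAt_mk_right E s z).cexp.differentiableAt)
  simp only [hf, hexp, hmul] at hparts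
  simp only [AddMemClass.coe_add, Pi.add_apply, add_mul]
  rw [integral_add hleft hright, hparts, add_neg_cancel]

lemma IsUniformlyDecaying.hasDerivAt_integral_mul_exp (hE : IsUniformlyDecaying E)
    (f : temperateGrowth (ℝ × V)) {s : ℝ} (hs : s ∈ Ioo (0 : ℝ) 1) :
    HasDerivAt (fun s => ∫ z, f.1 (s, z) * Complex.exp (E.1 (s, z)) ∂μ)
      (∫ z, (lineDerivation (1, 0) f + f * lineDerivation (1, 0) E).1 (s, z) *
        Complex.exp (E.1 (s, z)) ∂μ) s := by
  obtain ⟨B, hB, hbound⟩ := hE.exists_integrable_bound μ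
    (lineDerivation (1, 0) f + f * lineDerivation (1, 0) E)
  refine (hasDerivAt_integral_of_dominated_loc_of_deriv_le (Ioo_mem_nhds hs.1 hs.2)
    (.of_forall fun t => ((continuous_mul_exp f E).comp (by fun_prop)).aestronglyMeasurable)
    (hE.integrable_mul_exp μ f (Ioo_subset_Icc_self hs))
    ((continuous_mul_exp _ E).comp (by fun_prop)).aestronglyMeasurable
    (.of_forall fun z t ht => hbound t (Ioo_subset_Icc_self ht) z) hB
    (.of_forall fun z t _ => ?_)).2
  refine ((hasDerivAt_mk_left f t z).mul (hasDerivAt_mk_left E t z).cexp).congr_deriv ?_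
  rw [AddMemClass.coe_add, MulMemClass.coe_mul, Pi.add_apply, Pi.mul_apply]
  ring

lemma IsUniformlyDecaying.continuousOn_integral_mul_exp (hE : IsUniformlyDecaying E)
    (f : temperateGrowth (ℝ × V)) :
    ContinuousOn (fun s => ∫ z, f.1 (s, z) * Complex.exp (E.1 (s, z)) ∂μ) (Icc 0 1) := by
  obtain ⟨B, hB, hbound⟩ := hE.exists_integrable_bound μ f
  exact continuousOn_of_dominated
    (fun s _ => ((continuous_mul_exp f E).comp (by fun_prop)).aestronglyMeasurable)
    (fun s hs => .of_forall (hbound s hs)) hB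
    (.of_forall fun z => ((continuous_mul_exp f E).comp (by fun_prop)).continuousOn)

lemma IsUniformlyDecaying.integral_mul_exp_one_eq (hE : IsUniformlyDecaying E)
    (f : temperateGrowth (ℝ × V)) (hderiv : ∀ s ∈ Ioo (0 : ℝ) 1,
      ∫ z, (lineDerivation (1, 0) f + f * lineDerivation (1, 0) E).1 (s, z) *
        Complex.exp (E.1 (s, z)) ∂μ = 0) :
    ∫ z, f.1 (1, z) * Complex.exp (E.1 (1, z)) ∂μ =
      ∫ z, f.1 (0, z) * Complex.exp (E.1 (0, z)) ∂μ := by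
  rw [← sub_eq_zero, ← intervalIntegral.integral_eq_sub_of_hasDerivAt_of_le (f' := fun _ => 0)
    zero_le_one (hE.continuousOn_integral_mul_exp μ f)
    (fun s hs => by simpa only [hderiv s hs] using hE.hasDerivAt_integral_mul_exp μ f hs)
    intervalIntegrable_const]
  exact intervalIntegral.integral_zero

variable {n : Type*} [Fintype n] [DecidableEq n]

lemma IsUniformlyDecaying.integral_fiberDerivation_add_mul_mul_exp (hE : IsUniformlyDecaying E)
    (f : temperateGrowth (ℝ × V)) (u v : V) {s : ℝ} (hs : s ∈ Icc (0 : ℝ) 1) :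
    ∫ z, (fiberDerivation u v f + f * fiberDerivation u v E).1 (s, z) *
      Complex.exp (E.1 (s, z)) ∂μ = 0 := by
  have hsplit : ∀ z, (fiberDerivation u v f + f * fiberDerivation u v E).1 (s, z) *
      Complex.exp (E.1 (s, z)) =
      (lineDerivation (0, u) f + f * lineDerivation (0, u) E).1 (s, z) * Complex.exp (E.1 (s, z)) +
        Complex.I * ((lineDerivation (0, v) f + f * lineDerivation (0, v) E).1 (s, z) *
          Complex.exp (E.1 (s, z))) := fun z => by
    change (((lineDerivation (0, u) f).1 (s, z) + Complex.I * (lineDerivation (0, v) f).1 (s, z)) +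
      f.1 (s, z) * ((lineDerivation (0, u) E).1 (s, z) +
        Complex.I * (lineDerivation (0, v) E).1 (s, z))) * _ =
      ((lineDerivation (0, u) f).1 (s, z) + f.1 (s, z) * (lineDerivation (0, u) E).1 (s, z)) * _ +
      Complex.I * (((lineDerivation (0, v) f).1 (s, z) +
        f.1 (s, z) * (lineDerivation (0, v) E).1 (s, z)) * _)
    ring
  have hint := fun w : V =>
    hE.integrable_mul_exp μ (lineDerivation (0, w) f + f * lineDerivation (0, w) E) hs
  have hzero := fun w => hE.integral_lineDerivation_add_mul_mul_exp μ f w hs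
  simp only [hsplit]
  rw [integral_add (hint u) ((hint v).const_mul Complex.I), integral_const_mul, hzero, hzero,
    mul_zero, add_zero]

/-- Homotopy invariance of the integral of the form `e^E dr₁ ∧ ⋯ ∧ dr_n` with `E = -∑ pₖ rₖ`, when
`p` is annihilated by all the derivations involved. -/
theorem integral_det_mul_exp_eq (u v : n → V) (p r : n → temperateGrowth (ℝ × V))
    (hp : ∀ j k, fiberDerivation (u j) (v j) (p k) = 0)
    (hp' : ∀ k, lineDerivation (1, 0) (p k) = 0)
    (hE : IsUniformlyDecaying (-∑ k, p k * r k)) :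
    let J := (Matrix.of fun j k => fiberDerivation (u j) (v j) (r k)).det
    let E := -∑ k, p k * r k
    ∫ z, J.1 (1, z) * Complex.exp (E.1 (1, z)) ∂μ =
      ∫ z, J.1 (0, z) * Complex.exp (E.1 (0, z)) ∂μ := by
  intro J E
  obtain ⟨F, hF⟩ : ∃ F : n → temperateGrowth (ℝ × V),
      lineDerivation (1, 0) J + J * lineDerivation (1, 0) E =
        ∑ j, (fiberDerivation (u j) (v j) (F j) + F j * fiberDerivation (u j) (v j) E) :=
    ⟨_, derivation_det_add_det_mul_eq_sum (lineDerivation (1, 0))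
      (fun j => fiberDerivation (u j) (v j)) (fun i j => bracket_fiberDerivation _ _ _ _)
      (fun i => bracket_lineDerivation_fiberDerivation _ _ _) p r hp hp'⟩
  change IsUniformlyDecaying E at hE
  clear_value J E
  refine hE.integral_mul_exp_one_eq μ J fun s hs => ?_
  have hs' := Ioo_subset_Icc_self hs
  have hsum : ∀ w, (∑ j, (fiberDerivation (u j) (v j) (F j) +
      F j * fiberDerivation (u j) (v j) E)).1 w =
      ∑ j, (fiberDerivation (u j) (v j) (F j) + F j * fiberDerivation (u j) (v j) E).1 w :=
    fun w => by rw [AddSubmonoidClass.coe_finsetSum, Finset.sum_apply]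
  simp only [hF, hsum, Finset.sum_mul]
  rw [integral_finsetSum _ fun j _ => hE.integrable_mul_exp μ _ hs']
  exact Finset.sum_eq_zero fun j _ => hE.integral_fiberDerivation_add_mul_mul_exp μ _ _ _ hs'

end Integral
end TemperateGrowth

section ComplexCoordinates

variable {ι : Type*} [Fintype ι]

lemma isAddHaarMeasure_volume_prod : (volume : Measure
    (EuclideanSpace ℝ ι × EuclideanSpace ℝ ι)).IsAddHaarMeasure :=
  inferInstanceAs (Measure.prod volume volume).IsAddHaarMeasure

lemma integral_exp_neg_norm_sq_add_norm_sq :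
    ∫ z : EuclideanSpace ℝ ι × EuclideanSpace ℝ ι, Real.exp (-(‖z.1‖ ^ 2 + ‖z.2‖ ^ 2)) =
      Real.pi ^ Fintype.card ι := by
  have hgauss := GaussianFourier.integral_rexp_neg_mul_sq_norm (V := EuclideanSpace ℝ ι) one_pos
  simp only [neg_mul, one_mul, div_one, finrank_euclideanSpace] at hgauss
  simp only [neg_add, Real.exp_add]
  rw [Measure.volume_eq_prod, integral_prod_mul (fun x => Real.exp (-‖x‖ ^ 2))
    (fun x => Real.exp (-‖x‖ ^ 2)), hgauss, ← Real.rpow_add Real.pi_pos, add_halves,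
    Real.rpow_natCast]

variable {G : EuclideanSpace ℝ ι → EuclideanSpace ℝ ι}

/-- The `k`-th coordinate of `G ∘ L`, as a complex-valued function of temperate growth. -/
def coordComp {W : Type*} [NormedAddCommGroup W] [NormedSpace ℝ W] (hG : G.HasTemperateGrowth)
    (L : W →L[ℝ] EuclideanSpace ℝ ι) (k : ι) : temperateGrowth W :=
  ⟨fun w => (G (L w) k : ℂ), (Complex.ofRealCLM ∘L EuclideanSpace.proj k).hasTemperateGrowth.comp
    (hG.comp L.hasTemperateGrowth)⟩

lemma lineDerivation_coordComp {W : Type*} [NormedAddCommGroup W] [NormedSpace ℝ W]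
    (hG : G.HasTemperateGrowth) (L : W →L[ℝ] EuclideanSpace ℝ ι) (k : ι) (v w : W) :
    (lineDerivation v (coordComp hG L k)).1 w = (fderiv ℝ G (L w) (L v) k : ℂ) := by
  have hderiv : HasFDerivAt (coordComp hG L k).1
      ((Complex.ofRealCLM ∘L EuclideanSpace.proj k) ∘L fderiv ℝ G (L w) ∘L L) w :=
    (Complex.ofRealCLM ∘L EuclideanSpace.proj k).hasFDerivAt.comp w <|
      (hG.1.differentiable (by simp)).differentiableAt.hasFDerivAt.comp w L.hasFDerivAt
  rw [lineDerivation_apply, hderiv.fderiv]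
  rfl

/-- The function `G(x)ₖ + ε i G(y)ₖ` on `ℝ × (ℝⁿ × ℝⁿ)`. With `ε = 1` and `G = id` it is the `k`-th
holomorphic coordinate of `x + i y`. -/
def complexCoord (hG : G.HasTemperateGrowth) (ε : ℝ) (k : ι) :
    temperateGrowth (ℝ × EuclideanSpace ℝ ι × EuclideanSpace ℝ ι) :=
  coordComp hG (.fst ℝ _ _ ∘L .snd ℝ _ _) k +
    (ε * Complex.I) • coordComp hG (.snd ℝ _ _ ∘L .snd ℝ _ _) k

lemma complexCoord_apply (hG : G.HasTemperateGrowth) (ε : ℝ) (k : ι)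
    (w : ℝ × EuclideanSpace ℝ ι × EuclideanSpace ℝ ι) :
    (complexCoord hG ε k).1 w = G w.2.1 k + ε * Complex.I * G w.2.2 k := rfl

lemma lineDerivation_complexCoord (hG : G.HasTemperateGrowth) (ε : ℝ) (k : ι)
    (v w : ℝ × EuclideanSpace ℝ ι × EuclideanSpace ℝ ι) :
    (lineDerivation v (complexCoord hG ε k)).1 w =
      fderiv ℝ G w.2.1 v.2.1 k + ε * Complex.I * fderiv ℝ G w.2.2 v.2.2 k := by
  rw [complexCoord, map_add, Derivation.map_smul]
  exact congrArg₂ (· + (ε * Complex.I) * ·) (lineDerivation_coordComp hG _ k v w)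
    (lineDerivation_coordComp hG _ k v w)

/-- The coordinate `s` on `ℝ × V`. -/
def homotopyParameter (V : Type*) [NormedAddCommGroup V] [NormedSpace ℝ V] :
    temperateGrowth (ℝ × V) :=
  ⟨fun w => w.1, (Complex.ofRealCLM ∘L .fst ℝ ℝ V).hasTemperateGrowth⟩

lemma fiberDerivation_homotopyParameter {V : Type*} [NormedAddCommGroup V] [NormedSpace ℝ V]
    (u v : V) : fiberDerivation u v (homotopyParameter V) = 0 := by
  have hline : ∀ v : V, lineDerivation (0, v) (homotopyParameter V) = 0 := fun v =>
    Subtype.ext <| funext fun w => by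
      change fderiv ℝ (Complex.ofRealCLM ∘L .fst ℝ ℝ V) w (0, v) = 0
      rw [ContinuousLinearMap.fderiv]
      simp
  rw [fiberDerivation, Derivation.add_apply, Derivation.smul_apply, hline, hline, smul_zero,
    add_zero]

/-- The functions `z̄ₖ + s (G(x)ₖ - i G(y)ₖ - z̄ₖ)`, deforming the antiholomorphic coordinates into
`G(x)ₖ - i G(y)ₖ`. -/
def conjCoordHomotopy (hG : G.HasTemperateGrowth) (k : ι) :
    temperateGrowth (ℝ × EuclideanSpace ℝ ι × EuclideanSpace ℝ ι) :=
  complexCoord .id (-1) k + homotopyParameter _ * (complexCoord hG (-1) k - complexCoord .id (-1) k)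

/-- Evaluation at a point, as a ring homomorphism. -/
def evalTemperateGrowth {W : Type*} [NormedAddCommGroup W] [NormedSpace ℝ W] (w : W) :
    temperateGrowth W →+* ℂ :=
  (Pi.evalRingHom _ w).comp (temperateGrowth W).subtype

/-- The exponent `-∑ zₖ rₖ` attached to the homotopy `r` of `conjCoordHomotopy`. -/
def homotopyExponent (hG : G.HasTemperateGrowth) :
    temperateGrowth (ℝ × EuclideanSpace ℝ ι × EuclideanSpace ℝ ι) :=
  -∑ k, complexCoord .id 1 k * conjCoordHomotopy hG k

lemma homotopyExponent_apply (hG : G.HasTemperateGrowth) (s : ℝ) (x y : EuclideanSpace ℝ ι) :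
    (homotopyExponent hG).1 (s, x, y) =
      -((1 - s) * (‖x‖ ^ 2 + ‖y‖ ^ 2) + s * (⟪G x, x⟫ + ⟪G y, y⟫) : ℝ) -
        Complex.I * (s * (⟪G x, y⟫ - ⟪G y, x⟫) : ℝ) := by
  change evalTemperateGrowth (s, x, y) (homotopyExponent hG) = _
  have hterm : ∀ k, evalTemperateGrowth (s, x, y) (complexCoord .id 1 k * conjCoordHomotopy hG k) =
      (x k + Complex.I * y k) * ((x k - Complex.I * y k) +
        s * ((G x k - Complex.I * G y k) - (x k - Complex.I * y k))) := fun k => by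
    change (complexCoord .id 1 k).1 _ * ((complexCoord .id (-1) k).1 _ +
      s * ((complexCoord hG (-1) k).1 _ - (complexCoord .id (-1) k).1 _)) = _
    simp only [complexCoord_apply, id_eq]
    push_cast
    ring
  rw [homotopyExponent, map_neg, map_sum, Finset.sum_congr rfl fun k _ => hterm k]
  simp only [EuclideanSpace.real_norm_sq_eq, PiLp.inner_apply, RCLike.inner_apply, conj_trivial]
  push_cast
  simp only [← Finset.sum_add_distrib, Finset.mul_sum, ← Finset.sum_sub_distrib,
    ← Finset.sum_neg_distrib]
  refine Finset.sum_congr rfl fun k _ => ?_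
  linear_combination (y k ^ 2 * (1 - s) + s * y k * G y k : ℂ) * Complex.I_sq

lemma homotopyExponent_re (hG : G.HasTemperateGrowth) (s : ℝ) (x y : EuclideanSpace ℝ ι) :
    ((homotopyExponent hG).1 (s, x, y)).re =
      -((1 - s) * (‖x‖ ^ 2 + ‖y‖ ^ 2) + s * (⟪G x, x⟫ + ⟪G y, y⟫)) := by
  simp only [homotopyExponent_apply, Complex.sub_re, Complex.neg_re, Complex.ofReal_re,
    Complex.I_mul_re, Complex.ofReal_im, neg_zero, sub_zero]

lemma isUniformlyDecaying_homotopyExponent (hG : G.HasTemperateGrowth) {δ c : ℝ} (hδ : 0 < δ)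
    (hcoer : ∀ x, δ * ‖x‖ - c ≤ ⟪G x, x⟫) : IsUniformlyDecaying (homotopyExponent hG) := by
  refine ⟨δ, hδ, 2 * max c (δ ^ 2), fun s hs z => ?_⟩
  obtain ⟨x, y⟩ := z
  have hcoer' : ∀ x, δ * ‖x‖ - max c (δ ^ 2) ≤ ⟪G x, x⟫ := fun x =>
    (sub_le_sub_left (le_max_left _ _) _).trans (hcoer x)
  have hsq : ∀ x : EuclideanSpace ℝ ι, δ * ‖x‖ - max c (δ ^ 2) ≤ ‖x‖ ^ 2 := fun x => by
    nlinarith [le_max_right c (δ ^ 2), sq_nonneg (‖x‖ - δ / 2)]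
  have hconvex : ∀ x, δ * ‖x‖ - max c (δ ^ 2) ≤ (1 - s) * ‖x‖ ^ 2 + s * ⟪G x, x⟫ := fun x => by
    linarith [mul_le_mul_of_nonneg_left (hsq x) (sub_nonneg.2 hs.2),
      mul_le_mul_of_nonneg_left (hcoer' x) hs.1]
  have hnorm : δ * ‖(x, y)‖ ≤ δ * (‖x‖ + ‖y‖) := by
    gcongr
    exact max_le_add_of_nonneg (norm_nonneg x) (norm_nonneg y)
  rw [homotopyExponent_re]
  linarith [hconvex x, hconvex y]

section CauchyRiemann

variable [DecidableEq ι]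

/-- Twice the Cauchy–Riemann operator `∂/∂z̄ⱼ = (∂/∂xⱼ + i ∂/∂yⱼ) / 2`. -/
def dbar (j : ι) : Derivation ℂ (temperateGrowth (ℝ × EuclideanSpace ℝ ι × EuclideanSpace ℝ ι))
    (temperateGrowth (ℝ × EuclideanSpace ℝ ι × EuclideanSpace ℝ ι)) :=
  fiberDerivation (.single j 1, 0) (0, .single j 1)

lemma dbar_complexCoord (hG : G.HasTemperateGrowth) (ε : ℝ) (j k : ι)
    (w : ℝ × EuclideanSpace ℝ ι × EuclideanSpace ℝ ι) :
    (dbar j (complexCoord hG ε k)).1 w =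
      fderiv ℝ G w.2.1 (.single j 1) k - ε * fderiv ℝ G w.2.2 (.single j 1) k := by
  change (lineDerivation _ _).1 w + Complex.I * (lineDerivation _ _).1 w = _
  simp only [lineDerivation_complexCoord, map_zero, PiLp.zero_apply, Complex.ofReal_zero]
  linear_combination (ε * fderiv ℝ G w.2.2 (.single j 1) k) * Complex.I_mul_I

lemma dbar_conjCoordHomotopy (hG : G.HasTemperateGrowth) (j k : ι)
    (w : ℝ × EuclideanSpace ℝ ι × EuclideanSpace ℝ ι) :
    (dbar j (conjCoordHomotopy hG k)).1 w =
      (1 - w.1) * (2 * (EuclideanSpace.single j (1 : ℝ) k : ℝ)) +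
        w.1 * ((fderiv ℝ G w.2.1 + fderiv ℝ G w.2.2) (.single j 1) k : ℝ) := by
  have hs : dbar j (homotopyParameter _) = 0 := fiberDerivation_homotopyParameter _ _
  rw [conjCoordHomotopy, map_add, Derivation.leibniz, map_sub, hs, smul_zero, add_zero, smul_eq_mul]
  change (dbar j _).1 w + w.1 * ((dbar j _).1 w - (dbar j _).1 w) = _
  simp only [dbar_complexCoord, fderiv_id, ContinuousLinearMap.id_apply,
    _root_.add_apply, PiLp.add_apply]
  push_cast
  ring

lemma det_dbar_conjCoordHomotopy_one (hG : G.HasTemperateGrowth) (z) :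
    (Matrix.of fun j k => dbar j (conjCoordHomotopy hG k)).det.1 (1, z) =
      ((fderiv ℝ G z.1 + fderiv ℝ G z.2).det : ℝ) := by
  change evalTemperateGrowth (1, z) _ = Complex.ofRealHom _
  rw [RingHom.map_det, ContinuousLinearMap.det,
    ← LinearMap.det_toMatrix (EuclideanSpace.basisFun ι ℝ).toBasis, ← Matrix.det_transpose,
    RingHom.map_det]
  congr 1
  ext j k
  refine (dbar_conjCoordHomotopy hG k j (1, z)).trans ?_
  simp [LinearMap.toMatrix_apply]

lemma det_dbar_conjCoordHomotopy_zero (hG : G.HasTemperateGrowth) (z) :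
    (Matrix.of fun j k => dbar j (conjCoordHomotopy hG k)).det.1 (0, z) =
      2 ^ Fintype.card ι := by
  change evalTemperateGrowth (0, z) _ = _
  have hdiag : (evalTemperateGrowth (0, z)).mapMatrix
      (Matrix.of fun j k => dbar j (conjCoordHomotopy hG k)) = (2 : ℂ) • 1 := by
    ext j k
    refine (dbar_conjCoordHomotopy hG j k (0, z)).trans ?_
    rcases eq_or_ne j k with rfl | hjk
    · simp
    · simp [hjk, hjk.symm]
  rw [RingHom.map_det, hdiag, Matrix.det_smul, Matrix.det_one, mul_one]

lemma norm_det_mul_exp_homotopyExponent_one (hG : G.HasTemperateGrowth) (z) :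
    ‖(Matrix.of fun j k => dbar j (conjCoordHomotopy hG k)).det.1 (1, z) *
      Complex.exp ((homotopyExponent hG).1 (1, z))‖ =
    |(fderiv ℝ G z.1 + fderiv ℝ G z.2).det| * Real.exp (-(⟪G z.1, z.1⟫ + ⟪G z.2, z.2⟫)) := by
  rw [det_dbar_conjCoordHomotopy_one, norm_mul, Complex.norm_exp, homotopyExponent_re,
    Complex.norm_real, Real.norm_eq_abs]
  simp

end CauchyRiemann

variable {δ c : ℝ}

lemma integrable_abs_det_mul_exp_neg_inner (hG : G.HasTemperateGrowth) (hδ : 0 < δ)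
    (hcoer : ∀ x, δ * ‖x‖ - c ≤ ⟪G x, x⟫) :
    Integrable fun z : EuclideanSpace ℝ ι × EuclideanSpace ℝ ι =>
      |(fderiv ℝ G z.1 + fderiv ℝ G z.2).det| * Real.exp (-(⟪G z.1, z.1⟫ + ⟪G z.2, z.2⟫)) := by
  classical
  have := isAddHaarMeasure_volume_prod (ι := ι)
  simpa only [norm_det_mul_exp_homotopyExponent_one] using
    ((isUniformlyDecaying_homotopyExponent hG hδ hcoer).integrable_mul_exp volume
      (Matrix.of fun j k => dbar j (conjCoordHomotopy hG k)).det (right_mem_Icc.2 zero_le_one)).norm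

theorem two_pi_pow_le_integral_abs_det_mul_exp_neg_inner (hG : G.HasTemperateGrowth) (hδ : 0 < δ)
    (hcoer : ∀ x, δ * ‖x‖ - c ≤ ⟪G x, x⟫) :
    (2 * Real.pi) ^ Fintype.card ι ≤ ∫ z : EuclideanSpace ℝ ι × EuclideanSpace ℝ ι,
      |(fderiv ℝ G z.1 + fderiv ℝ G z.2).det| * Real.exp (-(⟪G z.1, z.1⟫ + ⟪G z.2, z.2⟫)) := by
  classical
  have := isAddHaarMeasure_volume_prod (ι := ι)
  have hgauss : ∀ z, (Matrix.of fun j k => dbar j (conjCoordHomotopy hG k)).det.1 (0, z) *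
      Complex.exp ((homotopyExponent hG).1 (0, z)) =
      (2 ^ Fintype.card ι * Real.exp (-(‖z.1‖ ^ 2 + ‖z.2‖ ^ 2)) : ℝ) := fun z => by
    rw [det_dbar_conjCoordHomotopy_zero, homotopyExponent_apply]
    simp
  have hhom := integral_det_mul_exp_eq volume (fun j => (EuclideanSpace.single j (1 : ℝ), 0))
    (fun j => (0, EuclideanSpace.single j (1 : ℝ))) (complexCoord .id 1) (conjCoordHomotopy hG)
    (fun j k => Subtype.ext <| funext fun w => (dbar_complexCoord .id 1 j k w).trans (by simp))
    (fun k => Subtype.ext <| funext fun w =>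
      (lineDerivation_complexCoord .id 1 k (1, 0) w).trans (by simp))
    (isUniformlyDecaying_homotopyExponent hG hδ hcoer)
  calc (2 * Real.pi) ^ Fintype.card ι
      = ‖∫ z, (Matrix.of fun j k => dbar j (conjCoordHomotopy hG k)).det.1 (0, z) *
          Complex.exp ((homotopyExponent hG).1 (0, z))‖ := by
        simp only [hgauss]
        rw [integral_complex_ofReal, Complex.norm_real, integral_const_mul,
          integral_exp_neg_norm_sq_add_norm_sq, ← mul_pow, Real.norm_of_nonneg (by positivity)]
    _ = ‖∫ z, (Matrix.of fun j k => dbar j (conjCoordHomotopy hG k)).det.1 (1, z) *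
          Complex.exp ((homotopyExponent hG).1 (1, z))‖ := congrArg norm hhom.symm
    _ ≤ _ := (norm_integral_le_integral_norm _).trans_eq <|
        integral_congr_ae <| .of_forall <| norm_det_mul_exp_homotopyExponent_one hG

end ComplexCoordinates

/-! ### A lower bound for the volume product of symmetric bodies -/

section Coercivity

variable {d : ℕ} {K : Set (Euc d)}

lemma exp_half_inner_mul_volume_le (hK : IsConvexBody K) (h0 : ∫ x in K, x = 0) (x : Euc d)
    {y : Euc d} (hy : y ∈ K) :
    Real.exp (⟪y, x⟫ / 2) * volume.real K ≤ 2 ^ d * ∫ z in K, Real.exp ⟪z, x⟫ := by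
  have := hK.isFiniteMeasure_restrict
  have hsub : (fun v => (2⁻¹ : ℝ) • y + v) '' ((2⁻¹ : ℝ) • K) ⊆ K := by
    rintro _ ⟨_, ⟨u, hu, rfl⟩, rfl⟩
    exact hK.2.1 hy hu (by norm_num) (by norm_num) (by norm_num)
  have hscale : ∫ v in (2⁻¹ : ℝ) • K, Real.exp ⟪v, x⟫ =
      (2 ^ d)⁻¹ * ∫ u in K, Real.exp ⟪u, (2⁻¹ : ℝ) • x⟫ := by
    have h := Measure.setIntegral_comp_smul_of_pos (volume : Measure (Euc d))
      (fun v => Real.exp ⟪v, x⟫) K (inv_pos.2 two_pos)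
    simp only [real_inner_smul_left, finrank_euclideanSpace, Fintype.card_fin, inv_pow,
      smul_eq_mul, inv_inv] at h
    simp only [real_inner_smul_right, h]
    rw [inv_mul_cancel_left₀ (by positivity)]
  rw [← inv_mul_le_iff₀ (by positivity)]
  calc (2 ^ d)⁻¹ * (Real.exp (⟪y, x⟫ / 2) * volume.real K)
      ≤ (2 ^ d)⁻¹ * (Real.exp (⟪y, x⟫ / 2) * ∫ u in K, Real.exp ⟪u, (2⁻¹ : ℝ) • x⟫) := by
        gcongr
        exact volume_le_setIntegral_exp_inner hK h0 _
    _ = ∫ v in (2⁻¹ : ℝ) • K, Real.exp ⟪(2⁻¹ : ℝ) • y + v, x⟫ := by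
        simp only [inner_add_left, Real.exp_add, real_inner_smul_left _ x (2⁻¹ : ℝ), div_eq_inv_mul]
        rw [integral_const_mul, hscale]
        ring
    _ = ∫ z in (fun v => (2⁻¹ : ℝ) • y + v) '' ((2⁻¹ : ℝ) • K), Real.exp ⟪z, x⟫ :=
        ((measurePreserving_add_left volume ((2⁻¹ : ℝ) • y)).setIntegral_image_emb
          (measurableEmbedding_addLeft _) (fun z => Real.exp ⟪z, x⟫) _).symm
    _ ≤ ∫ z in K, Real.exp ⟪z, x⟫ :=
        setIntegral_mono_set (integrable_exp_inner hK.memLp_id x)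
          (.of_forall fun _ => (Real.exp_pos _).le) hsub.eventuallyLE

lemma exp_neg_inner_tiltedMean_le_of_mem (hK : IsConvexBody K) (h0 : ∫ x in K, x = 0) (x : Euc d)
    {y : Euc d} (hy : y ∈ K) :
    Real.exp (-⟪tiltedMean (volume.restrict K) x, x⟫) ≤ 2 ^ d * Real.exp (-(⟪y, x⟫ / 2)) := by
  have := hK.isFiniteMeasure_restrict
  have := hK.neZero_restrict
  refine (exp_neg_inner_tiltedMean_le hK.memLp_id x).trans ?_
  rw [div_le_iff₀ (integral_exp_pos (integrable_exp_inner hK.memLp_id x)), Real.exp_neg,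
    measureReal_restrict_apply_univ, mul_right_comm, ← div_eq_mul_inv,
    le_div_iff₀' (Real.exp_pos _)]
  exact exp_half_inner_mul_volume_le hK h0 x hy

lemma le_inner_tiltedMean_of_closedBall_subset (hK : IsConvexBody K) (h0 : ∫ x in K, x = 0) {r : ℝ}
    (hr : 0 ≤ r) (hball : closedBall 0 r ⊆ K) (x : Euc d) :
    r / 2 * ‖x‖ - d * Real.log 2 ≤ ⟪tiltedMean (volume.restrict K) x, x⟫ := by
  have hmem : (r / ‖x‖) • x ∈ K := hball <| by
    rw [mem_closedBall_zero_iff, norm_smul, Real.norm_of_nonneg (by positivity), div_mul_comm]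
    exact mul_le_of_le_one_left hr (div_self_le_one _)
  have hexp := exp_neg_inner_tiltedMean_le_of_mem hK h0 x hmem
  have hinner : ⟪(r / ‖x‖) • x, x⟫ = r * ‖x‖ := by
    rw [real_inner_smul_left, real_inner_self_eq_norm_mul_norm, div_mul_eq_mul_div, mul_div_assoc,
      mul_self_div_self]
  rw [hinner, ← Real.exp_log (show (0 : ℝ) < 2 ^ d by positivity), Real.log_pow, ← Real.exp_add,
    Real.exp_le_exp] at hexp
  linarith

lemma hasTemperateGrowth_tiltedMean (hK : IsConvexBody K) :
    (tiltedMean (volume.restrict K)).HasTemperateGrowth := by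
  have := hK.isFiniteMeasure_restrict
  have := hK.neZero_restrict
  refine ⟨contDiff_infty.2 (contDiff_tiltedMean hK.memLp_id), fun n => ?_⟩
  obtain ⟨C, hC⟩ := bounded_iteratedFDeriv_integral_expTilt hK.memLp_id hK.memLp_id n
  exact ⟨0, C, fun x => (hC x).trans_eq (by simp)⟩

end Coercivity

section VolumeProduct

variable {d : ℕ} {K : Set (Euc d)}

lemma volume_real_smul {r : ℝ} (hr : 0 ≤ r) (S : Set (Euc d)) :
    volume.real (r • S) = r ^ d * volume.real S := by
  rw [measureReal_def, Measure.addHaar_smul_of_nonneg _ hr]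
  simp [measureReal_def, hr]

lemma IsConvexBodyAboutZero.smul (hK : IsConvexBodyAboutZero K) {r : ℝ} (hr : 0 < r) :
    IsConvexBodyAboutZero (r • K) := by
  have h0 : (0 : Euc d) ∈ interior (r • K) := by
    rw [interior_smul₀ hr.ne']
    exact ⟨0, hK.2, smul_zero r⟩
  exact ⟨⟨hK.1.1.smul r, hK.1.2.1.smul r, 0, h0⟩, h0⟩

lemma neg_polarSet (K : Set (Euc d)) : -polarSet K = polarSet (-K) := by
  ext y
  simp [polarSet]

lemma IsConvexBodyAboutZero.exists_gauge_polarSet_le_inner (hK : IsConvexBodyAboutZero K)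
    (w : Euc d) : ∃ y ∈ K, gauge (_root_.polarSet K) w ≤ ⟪y, w⟫ := by
  obtain ⟨y, hy, hmax⟩ := hK.1.1.exists_isMaxOn ⟨0, hK.zero_mem⟩
    (f := fun y => ⟪y, w⟫) (by fun_prop)
  refine ⟨y, hy, le_of_forall_gt_imp_ge_of_dense fun t ht => ?_⟩
  have h0 : 0 ≤ ⟪y, w⟫ := by simpa using hmax hK.zero_mem
  have ht0 : 0 < t := h0.trans_lt ht
  refine gauge_le_of_mem ht0.le ?_
  rw [mem_smul_set_iff_inv_smul_mem₀ ht0.ne']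
  intro x hx
  rw [real_inner_smul_right, inv_mul_le_iff₀ ht0, mul_one]
  exact (hmax hx).trans ht.le

lemma IsConvexBodyAboutZero.lintegral_exp_neg_gauge (hK : IsConvexBodyAboutZero K)
    (hneg : -K = K) :
    ∫⁻ w, ENNReal.ofReal (Real.exp (-gauge K w)) = ENNReal.ofReal d.factorial * volume K := by
  have hnhds : K ∈ nhds (0 : Euc d) := mem_interior_iff_mem_nhds.1 hK.2
  have habs : Absorbent ℝ K := absorbent_nhds_zero hnhds
  have hbal : Balanced ℝ K := (balanced_iff_neg_mem hK.1.2.1).2 fun {x} hx => by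
    rwa [← hneg, neg_mem_neg]
  have hvol := measure_lt_one_eq_integral_div_gamma (volume : Measure (Euc d)) gauge_zero
    (gauge_neg fun x hx => by rwa [← hneg, neg_mem_neg]) (gauge_add_le hK.1.2.1 habs)
    (fun {x} hx => (gauge_eq_zero habs
      (NormedSpace.isVonNBounded_of_isBounded ℝ hK.1.1.isBounded)).1 hx)
    (fun r x => (gauge_smul hbal r x).le) (p := 1) one_pos
  simp only [Real.rpow_one, div_one, finrank_euclideanSpace, Fintype.card_fin,
    Real.Gamma_nat_eq_factorial] at hvol
  rw [setOfPred_gauge_lt_one_eq_interior hK.1.2.1 hnhds,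
    measure_interior_of_null_frontier (hK.1.2.1.addHaar_frontier volume)] at hvol
  have hint : Integrable fun w => Real.exp (-gauge K w) := by
    by_contra hcon
    rw [integral_undef hcon, zero_div, ENNReal.ofReal_zero] at hvol
    exact hK.1.volume_real_pos.ne' (by rw [measureReal_def, hvol, ENNReal.toReal_zero])
  rw [← ofReal_integral_eq_lintegral_ofReal hint (.of_forall fun _ => (Real.exp_pos _).le), hvol,
    ← ENNReal.ofReal_mul (by positivity), mul_div_cancel₀ _ (by positivity)]

lemma lintegral_prod_eq_lintegral_sub {E : Type*} [MeasurableSpace E] [AddCommGroup E]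
    [MeasurableAdd₂ E] [MeasurableSub₂ E] (μ : Measure E) [SFinite μ] [μ.IsAddRightInvariant]
    {f : E × E → ℝ≥0∞} (hf : Measurable f) :
    ∫⁻ z, f z ∂μ.prod μ = ∫⁻ w, ∫⁻ x, f (x, w - x) ∂μ ∂μ := by
  have hshift : ∀ x, ∫⁻ y, f (x, y) ∂μ = ∫⁻ w, f (x, w - x) ∂μ := fun x =>
    (lintegral_sub_right_eq_self (fun y => f (x, y)) x).symm
  rw [lintegral_prod f hf.aemeasurable]
  simp only [hshift]
  exact lintegral_lintegral_swap
    (hf.comp (measurable_fst.prodMk (measurable_snd.sub measurable_fst))).aemeasurable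

/-- For fixed `w` the map `x ↦ tiltedMean μ x - tiltedMean μ (w - x)` is injective. -/
lemma lintegral_abs_det_fderiv_tiltedMean_add_le (hK : IsConvexBody K) (hneg : -K = K)
    (w : Euc d) :
    ∫⁻ x, ENNReal.ofReal |(fderiv ℝ (tiltedMean (volume.restrict K)) x +
      fderiv ℝ (tiltedMean (volume.restrict K)) (w - x)).det| ≤ volume ((2 : ℝ) • K) := by
  have := hK.isFiniteMeasure_restrict
  have := hK.neZero_restrict
  set b := tiltedMean (volume.restrict K)
  have hderiv : ∀ x, HasFDerivAt (fun x => b x - b (w - x))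
      (fderiv ℝ b x + fderiv ℝ b (w - x)) x := fun x => by
    have hcomp := (hasFDerivAt_tiltedMean hK.memLp_id (w - x)).comp x
      ((hasFDerivAt_id x).const_sub w)
    refine ((hasFDerivAt_tiltedMean hK.memLp_id x).sub hcomp).congr_fderiv ?_
    ext1 v
    simp [b]
  have hinj : Function.Injective fun x => b x - b (w - x) := fun x y hxy => by
    by_contra hne
    have hpos := inner_tiltedMean_sub_pos hK.memLp_id Measure.absolutelyContinuous_restrict hne
    have hpos' := inner_tiltedMean_sub_pos hK.memLp_id Measure.absolutelyContinuous_restrict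
      (sub_right_injective.ne hne : w - x ≠ w - y)
    rw [← sub_eq_sub_iff_sub_eq_sub.1 hxy, sub_sub_sub_cancel_left, ← neg_sub x y,
      inner_neg_right] at hpos'
    linarith
  calc ∫⁻ x, ENNReal.ofReal |(fderiv ℝ b x + fderiv ℝ b (w - x)).det|
      = volume (range fun x => b x - b (w - x)) := by
        rw [← setLIntegral_univ, ← image_univ]
        exact lintegral_abs_det_fderiv_eq_addHaar_image volume .univ
          (fun x _ => (hderiv x).hasFDerivWithinAt) hinj.injOn
    _ ≤ volume ((2 : ℝ) • K) := by
        refine measure_mono (range_subset_iff.2 fun x => ?_)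
        have hmem : ∀ x, b x ∈ K := tiltedMean_mem hK.memLp_id hK.2.1 hK.1.isClosed
          (ae_restrict_mem hK.1.measurableSet)
        have hneg_mem : -b (w - x) ∈ K := by
          rw [← hneg, neg_mem_neg]
          exact hmem (w - x)
        have hdouble : (2 : ℝ) • K = K + K := by
          simpa [one_add_one_eq_two] using hK.2.1.add_smul (zero_le_one' ℝ) zero_le_one
        rw [hdouble, sub_eq_add_neg]
        exact add_mem_add (hmem x) hneg_mem

/-- The integrand of `two_pi_pow_le_integral_abs_det_mul_exp_neg_inner` for the map
`tiltedMean (volume.restrict K)`. -/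
def tiltedMeanDensity (K : Set (Euc d)) (z : Euc d × Euc d) : ℝ :=
  let b := tiltedMean (volume.restrict K)
  |(fderiv ℝ b z.1 + fderiv ℝ b z.2).det| * Real.exp (-(⟪b z.1, z.1⟫ + ⟪b z.2, z.2⟫))

lemma continuous_tiltedMeanDensity (hK : IsConvexBody K) : Continuous (tiltedMeanDensity K) := by
  have hgrowth := hasTemperateGrowth_tiltedMean hK
  have hb := hgrowth.1.continuous
  have hb' := hgrowth.1.continuous_fderiv (by simp)
  exact (ContinuousLinearMap.continuous_det.comp (by fun_prop)).abs.mul (by fun_prop)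

theorem two_pi_pow_le_lintegral_tiltedMeanDensity (hK : IsConvexBody K) (h0 : ∫ x in K, x = 0) :
    ENNReal.ofReal ((2 * Real.pi) ^ d) ≤ ∫⁻ z, ENNReal.ofReal (tiltedMeanDensity K z) := by
  obtain ⟨r, hr, hball⟩ := (hK.isConvexBodyAboutZero h0).exists_closedBall_subset
  have hcoer := le_inner_tiltedMean_of_closedBall_subset hK h0 hr.le hball
  have hgrowth := hasTemperateGrowth_tiltedMean hK
  have hint : Integrable (tiltedMeanDensity K) :=
    integrable_abs_det_mul_exp_neg_inner hgrowth (half_pos hr) hcoer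
  have hpi := two_pi_pow_le_integral_abs_det_mul_exp_neg_inner hgrowth (half_pos hr) hcoer
  rw [Fintype.card_fin] at hpi
  rw [← ofReal_integral_eq_lintegral_ofReal hint
    (.of_forall fun z => mul_nonneg (abs_nonneg _) (Real.exp_pos _).le)]
  exact ENNReal.ofReal_le_ofReal hpi

lemma lintegral_tiltedMeanDensity_sub_le (hK : IsConvexBodyAboutZero K) (hneg : -K = K)
    (w : Euc d) :
    ∫⁻ x, ENNReal.ofReal (tiltedMeanDensity K (x, w - x)) ≤
      ENNReal.ofReal (4 ^ d * Real.exp (-gauge ((2 : ℝ) • polarSet K) w)) *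
        volume ((2 : ℝ) • K) := by
  have h0 := setIntegral_id_eq_zero_of_neg_eq hneg
  obtain ⟨y, hy, hgauge⟩ := hK.exists_gauge_polarSet_le_inner w
  have hscale : gauge ((2 : ℝ) • polarSet K) w = gauge (polarSet K) w / 2 := by
    rw [gauge_smul_left_of_nonneg zero_le_two, Pi.smul_apply, smul_eq_mul, div_eq_inv_mul]
  set b := tiltedMean (volume.restrict K)
  have hexp : ∀ x, Real.exp (-(⟪b x, x⟫ + ⟪b (w - x), w - x⟫)) ≤
      4 ^ d * Real.exp (-gauge ((2 : ℝ) • polarSet K) w) := fun x => by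
    calc Real.exp (-(⟪b x, x⟫ + ⟪b (w - x), w - x⟫))
        = Real.exp (-⟪b x, x⟫) * Real.exp (-⟪b (w - x), w - x⟫) := by rw [neg_add, Real.exp_add]
      _ ≤ (2 ^ d * Real.exp (-(⟪y, x⟫ / 2))) * (2 ^ d * Real.exp (-(⟪y, w - x⟫ / 2))) := by
          gcongr <;> exact exp_neg_inner_tiltedMean_le_of_mem hK.1 h0 _ hy
      _ = 4 ^ d * Real.exp (-(⟪y, w⟫ / 2)) := by
          rw [mul_mul_mul_comm, ← mul_pow, ← Real.exp_add, inner_sub_right]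
          ring_nf
      _ ≤ 4 ^ d * Real.exp (-gauge ((2 : ℝ) • polarSet K) w) := by
          rw [hscale]
          gcongr
  calc ∫⁻ x, ENNReal.ofReal (tiltedMeanDensity K (x, w - x))
      ≤ ∫⁻ x, ENNReal.ofReal (4 ^ d * Real.exp (-gauge ((2 : ℝ) • polarSet K) w)) *
          ENNReal.ofReal |(fderiv ℝ b x + fderiv ℝ b (w - x)).det| := by
        refine lintegral_mono fun x => ?_
        rw [← ENNReal.ofReal_mul (by positivity), mul_comm]
        exact ENNReal.ofReal_le_ofReal (mul_le_mul_of_nonneg_left (hexp x) (abs_nonneg _))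
    _ = ENNReal.ofReal (4 ^ d * Real.exp (-gauge ((2 : ℝ) • polarSet K) w)) *
          ∫⁻ x, ENNReal.ofReal |(fderiv ℝ b x + fderiv ℝ b (w - x)).det| :=
        lintegral_const_mul' _ _ ENNReal.ofReal_ne_top
    _ ≤ _ := by
        gcongr
        exact lintegral_abs_det_fderiv_tiltedMean_add_le hK.1 hneg w

/-- The Bourgain–Milman inequality for symmetric bodies. -/
theorem two_pi_pow_le_volume_mul_volume_polarSet (hK : IsConvexBodyAboutZero K) (hneg : -K = K) :
    (2 * Real.pi) ^ d ≤
      16 ^ d * (d.factorial * volume.real K * volume.real (polarSet K)) := by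
  have hpolar := hK.polarSet.smul two_pos
  have hpolar_neg : -((2 : ℝ) • polarSet K) = (2 : ℝ) • polarSet K := by
    rw [← smul_set_neg, neg_polarSet, hneg]
  have hfin : volume ((2 : ℝ) • K) ≠ ∞ := (hK.smul two_pos).1.1.measure_ne_top
  have hfin_polar : volume ((2 : ℝ) • polarSet K) ≠ ∞ := hpolar.1.1.measure_ne_top
  have hle : ENNReal.ofReal ((2 * Real.pi) ^ d) ≤
      ENNReal.ofReal (4 ^ d) * (ENNReal.ofReal d.factorial * volume ((2 : ℝ) • polarSet K)) *
        volume ((2 : ℝ) • K) := by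
    calc ENNReal.ofReal ((2 * Real.pi) ^ d)
        ≤ ∫⁻ z, ENNReal.ofReal (tiltedMeanDensity K z) :=
          two_pi_pow_le_lintegral_tiltedMeanDensity hK.1 (setIntegral_id_eq_zero_of_neg_eq hneg)
      _ = ∫⁻ w, ∫⁻ x, ENNReal.ofReal (tiltedMeanDensity K (x, w - x)) :=
          lintegral_prod_eq_lintegral_sub volume
            (continuous_tiltedMeanDensity hK.1).measurable.ennreal_ofReal
      _ ≤ ∫⁻ w, ENNReal.ofReal (4 ^ d * Real.exp (-gauge ((2 : ℝ) • polarSet K) w)) *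
            volume ((2 : ℝ) • K) :=
          lintegral_mono (lintegral_tiltedMeanDensity_sub_le hK hneg)
      _ = _ := by
          simp only [ENNReal.ofReal_mul (by positivity : (0 : ℝ) ≤ 4 ^ d)]
          rw [lintegral_mul_const' _ _ hfin,
            lintegral_const_mul' _ _ ENNReal.ofReal_ne_top,
            hpolar.lintegral_exp_neg_gauge hpolar_neg]
  have hreal := ENNReal.toReal_mono (by finiteness) hle
  simp only [ENNReal.toReal_mul, ← measureReal_def, volume_real_smul zero_le_two] at hreal
  rw [ENNReal.toReal_ofReal (by positivity), ENNReal.toReal_ofReal (by positivity),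
    ENNReal.toReal_ofReal (by positivity)] at hreal
  refine hreal.trans_eq ?_
  rw [show (16 : ℝ) = 4 * 2 * 2 by norm_num, mul_pow, mul_pow]
  ring

end VolumeProduct

/-! ### Sums, translates and volumes -/

section TranslatesOfSets

variable {G : Type*} [AddCommGroup G] {U S : Set G}

lemma exists_finset_maximal_separated (h0 : 0 ∈ S) (hneg : -S = S) {n : ℕ}
    (hcard : ∀ F : Finset G, ↑F ⊆ U → (F : Set G).Pairwise (fun x y => x - y ∉ S) → F.card ≤ n) :
    ∃ F : Finset G, ↑F ⊆ U ∧ (F : Set G).Pairwise (fun x y => x - y ∉ S) ∧ U ⊆ ↑F + S := by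
  classical
  set separated : Set (Finset G) := {F | ↑F ⊆ U ∧ (F : Set G).Pairwise fun x y => x - y ∉ S}
  have hfinite : (Finset.card '' separated).Finite :=
    (finite_Iic n).subset (image_subset_iff.2 fun F hF => hcard F hF.1 hF.2)
  obtain ⟨F, hF, hmax⟩ := hfinite.exists_maximalFor' Finset.card separated ⟨∅, by simp [separated]⟩
  refine ⟨F, hF.1, hF.2, fun u hu => ?_⟩
  by_contra hcon
  have hsep : ∀ x ∈ F, u - x ∉ S := fun x hx hux => hcon ⟨x, hx, u - x, hux, by simp⟩
  have hsep' : ∀ x ∈ F, x - u ∉ S := fun x hx => by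
    rw [← hneg, mem_neg, neg_sub]
    exact hsep x hx
  have huF : u ∉ F := fun h => hsep u h (by simpa using h0)
  have hinsert : insert u F ∈ separated := by
    refine ⟨by simpa [insert_subset_iff] using ⟨hu, hF.1⟩, ?_⟩
    rw [Finset.coe_insert, pairwise_insert]
    exact ⟨hF.2, fun x hx _ => ⟨hsep x hx, hsep' x hx⟩⟩
  have hle : (insert u F).card ≤ F.card := hmax hinsert (Finset.card_le_card (F.subset_insert u))
  rw [Finset.card_insert_of_notMem huF] at hle
  omega

variable [MeasurableSpace G] {μ : Measure G} [μ.IsAddLeftInvariant]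

lemma measureReal_vadd_set (x : G) (S : Set G) : μ.real (x +ᵥ S) = μ.real S := by
  rw [measureReal_def, measure_vadd, measureReal_def]

variable {F : Finset G}

lemma measureReal_le_card_mul_of_subset_add (hS : μ S ≠ ∞) (hU : U ⊆ ↑F + S) :
    μ.real U ≤ F.card * μ.real S := by
  have hunion : ↑F + S = ⋃ x ∈ F, x +ᵥ S := (iUnion_vadd_set (F : Set G) S).symm
  have hfin : μ (⋃ x ∈ F, x +ᵥ S) ≠ ∞ :=
    (measure_biUnion_lt_top F.finite_toSet fun x _ => by rwa [measure_vadd, lt_top_iff_ne_top]).ne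
  rw [hunion] at hU
  calc μ.real U ≤ μ.real (⋃ x ∈ F, x +ᵥ S) := measureReal_mono hU hfin
    _ ≤ ∑ x ∈ F, μ.real (x +ᵥ S) := measureReal_biUnion_finset_le F _
    _ = F.card * μ.real S := by simp [measureReal_vadd_set]

lemma card_mul_measureReal_le_of_pairwiseDisjoint [MeasurableAdd G] (hS : MeasurableSet S)
    (hFU : ↑F ⊆ U) (hfin : μ (U + S) ≠ ∞) (hdisj : (F : Set G).PairwiseDisjoint (· +ᵥ S)) :
    F.card * μ.real S ≤ μ.real (U + S) := by
  have hsub : (⋃ x ∈ F, x +ᵥ S) ⊆ U + S :=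
    (iUnion_vadd_set (F : Set G) S).trans_subset (add_subset_add_right hFU)
  have hfinS : ∀ x ∈ F, μ (x +ᵥ S) ≠ ∞ := fun x hx =>
    measure_ne_top_of_subset ((subset_biUnion_of_mem (u := (· +ᵥ S)) hx).trans hsub) hfin
  calc F.card * μ.real S = ∑ x ∈ F, μ.real (x +ᵥ S) := by simp [measureReal_vadd_set]
    _ = μ.real (⋃ x ∈ F, x +ᵥ S) :=
        (measureReal_biUnion_finset hdisj (fun x _ => hS.const_vadd x) hfinS).symm
    _ ≤ μ.real (U + S) := measureReal_mono hsub hfin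

end TranslatesOfSets

lemma pairwiseDisjoint_vadd_half_smul {E : Type*} [AddCommGroup E] [Module ℝ E] {F S : Set E}
    (hS : Convex ℝ S) (hneg : -S = S) (hF : F.Pairwise fun x y => x - y ∉ S) :
    F.PairwiseDisjoint (· +ᵥ (2⁻¹ : ℝ) • S) := by
  refine fun x hx y hy hxy => disjoint_left.2 ?_
  rintro _ ⟨_, ⟨a, ha, rfl⟩, rfl⟩ ⟨_, ⟨b, hb, rfl⟩, hab⟩
  have hab' : y + (2⁻¹ : ℝ) • b = x + (2⁻¹ : ℝ) • a := hab
  have hdiff : x - y = (2⁻¹ : ℝ) • b + (2⁻¹ : ℝ) • -a := by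
    rw [smul_neg, ← sub_eq_add_neg, sub_eq_sub_iff_add_eq_add, ← hab', add_comm]
  refine hF hx hy hxy (hdiff ▸ hS hb ?_ (by norm_num) (by norm_num) (by norm_num))
  rwa [← hneg, neg_mem_neg]

lemma lintegral_measure_inter_preimage_sub {G : Type*} [MeasurableSpace G] [AddCommGroup G]
    [MeasurableAdd₂ G] [MeasurableSub₂ G] (μ : Measure G) [SFinite μ] [μ.IsAddRightInvariant]
    {A B : Set G} (hA : MeasurableSet A) (hB : MeasurableSet B) :
    ∫⁻ w, μ (A ∩ (fun x => w - x) ⁻¹' B) ∂μ = μ A * μ B := by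
  have hfibre : ∀ w, μ (A ∩ (fun x => w - x) ⁻¹' B) =
      ∫⁻ x, (A ×ˢ B).indicator 1 (x, w - x) ∂μ := fun w =>
    (lintegral_indicator_one (hA.inter (measurable_id.const_sub w hB))).symm
  simp only [hfibre]
  rw [← lintegral_prod_eq_lintegral_sub μ (measurable_one.indicator (hA.prod hB)),
    lintegral_indicator_one (hA.prod hB), Measure.prod_prod]

section VolumeOfSum

variable {d : ℕ} {K : Set (Euc d)}

/-- A Rogers–Shephard type inequality: for `w` in `2⁻¹ • (A + B)` the fibre `A ∩ (w - B)` contains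
a translate of `2⁻¹ • S`. -/
lemma volume_add_mul_volume_le {A B S : Set (Euc d)} (hA : IsCompact A) (hB : IsCompact B)
    (hAconv : Convex ℝ A) (hBconv : Convex ℝ B) (hSA : S ⊆ A) (hSB : -S ⊆ B) :
    volume.real (A + B) * volume.real S ≤ 4 ^ d * (volume.real A * volume.real B) := by
  have hfibre : ∀ w ∈ (2⁻¹ : ℝ) • (A + B),
      volume ((2⁻¹ : ℝ) • S) ≤ volume (A ∩ (fun x => w - x) ⁻¹' B) := by
    rintro _ ⟨_, ⟨a, ha, b, hb, rfl⟩, rfl⟩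
    rw [← measure_vadd volume ((2⁻¹ : ℝ) • a)]
    refine measure_mono ?_
    rintro _ ⟨_, ⟨s, hs, rfl⟩, rfl⟩
    refine ⟨hAconv ha (hSA hs) (by norm_num) (by norm_num) (by norm_num), ?_⟩
    have hmem := hBconv hb (hSB (neg_mem_neg.2 hs)) (by norm_num : (0 : ℝ) ≤ 2⁻¹)
      (by norm_num : (0 : ℝ) ≤ 2⁻¹) (by norm_num)
    rw [mem_preimage]
    convert hmem using 1
    simp only [vadd_eq_add, smul_add, smul_neg]
    abel
  have hle : volume ((2⁻¹ : ℝ) • S) * volume ((2⁻¹ : ℝ) • (A + B)) ≤ volume A * volume B := by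
    rw [← lintegral_measure_inter_preimage_sub volume hA.measurableSet hB.measurableSet,
      ← setLIntegral_const]
    exact (setLIntegral_mono' ((hA.add hB).smul _).measurableSet hfibre).trans
      (setLIntegral_le_lintegral _ _)
  have hreal := ENNReal.toReal_mono (ENNReal.mul_ne_top hA.measure_ne_top hB.measure_ne_top) hle
  simp only [ENNReal.toReal_mul, ← measureReal_def,
    volume_real_smul (by norm_num : (0 : ℝ) ≤ 2⁻¹)] at hreal
  have hfour : (4 : ℝ) ^ d * (2⁻¹ ^ d * 2⁻¹ ^ d) = 1 := by
    rw [← mul_pow, ← mul_pow]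
    norm_num
  calc volume.real (A + B) * volume.real S
      = 4 ^ d * (2⁻¹ ^ d * volume.real S * (2⁻¹ ^ d * volume.real (A + B))) := by
        linear_combination (-(volume.real (A + B) * volume.real S)) * hfour
    _ ≤ 4 ^ d * (volume.real A * volume.real B) := by gcongr

lemma volume_real_mono {S T : Set (Euc d)} (hT : IsCompact T) (hST : S ⊆ T) :
    volume.real S ≤ volume.real T :=
  measureReal_mono hST hT.measure_ne_top

lemma IsConvexBody.volume_sub_self_le (hK : IsConvexBody K) :
    volume.real (K - K) ≤ 4 ^ d * volume.real K := by
  have hle := volume_add_mul_volume_le hK.1 hK.1.neg hK.2.1 hK.2.1.neg Subset.rfl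
    (Subset.refl (-K))
  have hneg : volume.real (-K) = volume.real K := by simp [measureReal_def]
  rw [hneg, ← sub_eq_add_neg, ← mul_assoc] at hle
  exact le_of_mul_le_mul_right hle hK.volume_real_pos

end VolumeOfSum

namespace IsConvexBodyAboutZero

variable {d : ℕ} {K L : Set (Euc d)}

lemma mem_nhds (hK : IsConvexBodyAboutZero K) : K ∈ nhds (0 : Euc d) :=
  mem_interior_iff_mem_nhds.1 hK.2

lemma neg (hK : IsConvexBodyAboutZero K) : IsConvexBodyAboutZero (-K) := by
  have h0 : (0 : Euc d) ∈ interior (-K) :=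
    mem_interior_iff_mem_nhds.2 (neg_mem_nhds_zero _ hK.mem_nhds)
  exact ⟨⟨hK.1.1.neg, hK.1.2.1.neg, 0, h0⟩, h0⟩

lemma subset_add_right (hL : IsConvexBodyAboutZero L) (S : Set (Euc d)) : S ⊆ S + L :=
  fun x hx => ⟨x, hx, 0, hL.zero_mem, add_zero x⟩

lemma subset_add_left (hL : IsConvexBodyAboutZero L) (S : Set (Euc d)) : S ⊆ L + S :=
  fun x hx => ⟨0, hL.zero_mem, x, hx, zero_add x⟩

lemma add (hK : IsConvexBodyAboutZero K) (hL : IsConvexBodyAboutZero L) :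
    IsConvexBodyAboutZero (K + L) := by
  have h0 : (0 : Euc d) ∈ interior (K + L) := interior_mono (hL.subset_add_right K) hK.2
  exact ⟨⟨hK.1.1.add hL.1.1, hK.1.2.1.add hL.1.2.1, 0, h0⟩, h0⟩

lemma inter (hK : IsConvexBodyAboutZero K) (hL : IsConvexBodyAboutZero L) :
    IsConvexBodyAboutZero (K ∩ L) := by
  have h0 : (0 : Euc d) ∈ interior (K ∩ L) := by
    rw [interior_inter]
    exact ⟨hK.2, hL.2⟩
  exact ⟨⟨hK.1.1.inter hL.1.1, hK.1.2.1.inter hL.1.2.1, 0, h0⟩, h0⟩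

lemma sub_self (hK : IsConvexBodyAboutZero K) : IsConvexBodyAboutZero (K - K) := by
  rw [sub_eq_add_neg]
  exact hK.add hK.neg

lemma subset_sub_self (hK : IsConvexBodyAboutZero K) : K ⊆ K - K := by
  rw [sub_eq_add_neg]
  exact hK.neg.subset_add_right K

lemma neg_subset_sub_self (hK : IsConvexBodyAboutZero K) : -K ⊆ K - K := by
  rw [sub_eq_add_neg]
  exact hK.subset_add_left (-K)

lemma inter_neg (hK : IsConvexBodyAboutZero K) : IsConvexBodyAboutZero (K ∩ -K) :=
  hK.inter hK.neg

lemma smul_subset (hK : IsConvexBodyAboutZero K) {r : ℝ} (h0 : 0 ≤ r) (h1 : r ≤ 1) :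
    r • K ⊆ K := by
  rintro _ ⟨x, hx, rfl⟩
  exact hK.1.2.1.smul_mem_of_zero_mem hK.zero_mem hx ⟨h0, h1⟩

lemma gauge_le_one_iff (hK : IsConvexBodyAboutZero K) {x : Euc d} : gauge K x ≤ 1 ↔ x ∈ K := by
  rw [gauge_le_one_iff_mem_closure hK.1.2.1 hK.mem_nhds, hK.1.1.isClosed.closure_eq]

lemma gauge_eq_one_iff (hK : IsConvexBodyAboutZero K) {x : Euc d} :
    gauge K x = 1 ↔ x ∈ frontier K :=
  gauge_eq_one_iff_mem_frontier hK.1.2.1 hK.mem_nhds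

lemma gauge_pos (hK : IsConvexBodyAboutZero K) {x : Euc d} (hx : x ≠ 0) : 0 < gauge K x :=
  (_root_.gauge_pos (absorbent_nhds_zero hK.mem_nhds)
    (NormedSpace.isVonNBounded_of_isBounded ℝ hK.1.1.isBounded)).2 hx

end IsConvexBodyAboutZero

section Symmetrization

variable {d : ℕ} {K L : Set (Euc d)}

lemma neg_sub_self (K : Set (Euc d)) : -(K - K) = K - K := neg_sub K K

lemma neg_inter_neg (K : Set (Euc d)) : -(K ∩ -K) = K ∩ -K := by
  rw [Set.inter_neg, neg_neg, inter_comm]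

lemma polarSet_smul {r : ℝ} (hr : 0 < r) (K : Set (Euc d)) :
    polarSet (r • K) = r⁻¹ • polarSet K := by
  ext y
  simp [mem_smul_set_iff_inv_smul_mem₀ (inv_ne_zero hr.ne'), polarSet, mem_smul_set,
    real_inner_smul_left, real_inner_smul_right]

lemma polarSet_sub_self_subset (hK : IsConvexBodyAboutZero K) :
    polarSet (K - K) ⊆ polarSet K ∩ -polarSet K := by
  rw [neg_polarSet]
  exact subset_inter (polarSet_antitone hK.subset_sub_self)
    (polarSet_antitone hK.neg_subset_sub_self)

lemma polarSet_sub_polarSet_subset (hK : IsConvexBodyAboutZero K) :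
    polarSet K - polarSet K ⊆ (2 : ℝ) • polarSet (K ∩ -K) := by
  have hdouble : (2 : ℝ) • polarSet (K ∩ -K) = polarSet (K ∩ -K) + polarSet (K ∩ -K) := by
    simpa [one_add_one_eq_two] using
      hK.inter_neg.polarSet.1.2.1.add_smul (zero_le_one' ℝ) zero_le_one
  rw [hdouble, sub_eq_add_neg, neg_polarSet]
  exact add_subset_add (polarSet_antitone inter_subset_left) (polarSet_antitone inter_subset_right)

lemma polarSet_inter_subset_add (hK : IsConvexBodyAboutZero K) (hL : IsConvexBodyAboutZero L) :
    polarSet (K ∩ L) ⊆ polarSet K + polarSet L := by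
  rw [← (hK.polarSet.add hL.polarSet).polarSet_polarSet]
  refine polarSet_antitone (subset_inter ?_ ?_)
  · exact (polarSet_antitone (hL.polarSet.subset_add_right _)).trans_eq hK.polarSet_polarSet
  · exact (polarSet_antitone (hK.polarSet.subset_add_left _)).trans_eq hL.polarSet_polarSet

end Symmetrization

/-! ### Bodies that are almost symmetric -/

section AlmostSymmetric

variable {d : ℕ} {K L : Set (Euc d)}

lemma volume_mul_volume_polarSet_le (hK : IsConvexBody K) (h0 : ∫ x in K, x = 0)
    (hL : IsConvexBodyAboutZero L) (hneg : -L = L) :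
    volume.real K * volume.real (polarSet K) ≤
      (16 * Real.exp 3) ^ d * (volume.real L * volume.real (polarSet L)) := by
  have hfact : (d.factorial : ℝ) ≤ (d : ℝ) ^ d := by exact_mod_cast d.factorial_le_pow
  have hfactpi : 0 < (d.factorial : ℝ) * (2 * Real.pi) ^ d := by positivity
  refine le_of_mul_le_mul_left ?_ hfactpi
  calc d.factorial * (2 * Real.pi) ^ d * (volume.real K * volume.real (polarSet K))
      ≤ (d : ℝ) ^ d * (2 * Real.pi) ^ d * (volume.real K * volume.real (polarSet K)) := by
        gcongr
    _ = (2 * Real.pi) ^ d * ((d : ℝ) ^ d * volume.real K * volume.real (polarSet K)) := by ring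
    _ ≤ 16 ^ d * (d.factorial * volume.real L * volume.real (polarSet L)) *
          (2 * Real.pi * Real.exp 3) ^ d := by
        gcongr
        · exact two_pi_pow_le_volume_mul_volume_polarSet hL hneg
        · exact pow_mul_volume_mul_volume_polarSet_le hK h0
    _ = _ := by
        simp only [mul_pow]
        ring

/-- The difference body of `K` is larger in volume than the largest symmetric subset `K ∩ -K` by
a factor at most `c ^ d`. Up to the value of `c`, this property holds for centered bodies and is
stable under polarity. -/
def IsAlmostSymmetric (c : ℝ) (K : Set (Euc d)) : Prop :=
  IsConvexBodyAboutZero K ∧ volume.real (K - K) ≤ c ^ d * volume.real (K ∩ -K)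

variable {c : ℝ}

lemma IsAlmostSymmetric.mono (hK : IsAlmostSymmetric c K) (hc : 0 ≤ c) {c' : ℝ} (hcc' : c ≤ c') :
    IsAlmostSymmetric c' K :=
  ⟨hK.1, hK.2.trans (by gcongr)⟩

lemma IsAlmostSymmetric.smul (hK : IsAlmostSymmetric c K) {r : ℝ} (hr : 0 < r) :
    IsAlmostSymmetric c (r • K) := by
  refine ⟨hK.1.smul hr, ?_⟩
  rw [sub_eq_add_neg, ← smul_set_neg, ← smul_add, ← sub_eq_add_neg, ← smul_set_inter₀ hr.ne',
    volume_real_smul hr.le, volume_real_smul hr.le]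
  calc r ^ d * volume.real (K - K) ≤ r ^ d * (c ^ d * volume.real (K ∩ -K)) := by
        gcongr
        exact hK.2
    _ = c ^ d * (r ^ d * volume.real (K ∩ -K)) := by ring

lemma IsConvexBody.isAlmostSymmetric (hK : IsConvexBody K) (h0 : ∫ x in K, x = 0) :
    IsAlmostSymmetric (256 * Real.exp 3) K := by
  have hK0 := hK.isConvexBodyAboutZero h0
  have hpolar := hK0.polarSet
  have hcore : volume.real (polarSet (polarSet K - polarSet K)) ≤ volume.real (K ∩ -K) := by
    refine volume_real_mono hK0.inter_neg.1.1 ?_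
    simpa only [hK0.polarSet_polarSet] using polarSet_sub_self_subset hpolar
  have hproduct : volume.real K * volume.real (polarSet K) ≤
      (64 * Real.exp 3) ^ d * volume.real (K ∩ -K) * volume.real (polarSet K) := by
    calc volume.real K * volume.real (polarSet K)
        ≤ (16 * Real.exp 3) ^ d * (volume.real (polarSet K - polarSet K) *
            volume.real (polarSet (polarSet K - polarSet K))) :=
          volume_mul_volume_polarSet_le hK h0 hpolar.sub_self (neg_sub_self _)
      _ ≤ (16 * Real.exp 3) ^ d * ((4 ^ d * volume.real (polarSet K)) *
            volume.real (K ∩ -K)) := by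
          gcongr
          exact hpolar.1.volume_sub_self_le
      _ = _ := by
          rw [show (64 : ℝ) = 16 * 4 by norm_num]
          simp only [mul_pow]
          ring
  refine ⟨hK0, ?_⟩
  calc volume.real (K - K) ≤ 4 ^ d * volume.real K := hK.volume_sub_self_le
    _ ≤ 4 ^ d * ((64 * Real.exp 3) ^ d * volume.real (K ∩ -K)) := by
        gcongr
        exact le_of_mul_le_mul_right hproduct hpolar.1.volume_real_pos
    _ = _ := by
        rw [show (256 : ℝ) = 4 * 64 by norm_num]
        simp only [mul_pow]
        ring

lemma IsAlmostSymmetric.polarSet (hK : IsAlmostSymmetric c K) (hc : 0 ≤ c) :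
    IsAlmostSymmetric (32 * Real.exp 3 * c) (polarSet K) := by
  obtain ⟨hK, hvol⟩ := hK
  have hpolar := hK.polarSet
  have hcore := hK.inter_neg
  have hdual := volume_real_mono hpolar.inter_neg.1.1 (polarSet_sub_self_subset hK)
  have hproduct : volume.real (K ∩ -K) * volume.real (_root_.polarSet (K ∩ -K)) ≤
      volume.real (K ∩ -K) * ((16 * Real.exp 3 * c) ^ d *
        volume.real (_root_.polarSet K ∩ -_root_.polarSet K)) := by
    calc volume.real (K ∩ -K) * volume.real (_root_.polarSet (K ∩ -K))
        ≤ (16 * Real.exp 3) ^ d * (volume.real (K - K) *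
            volume.real (_root_.polarSet (K - K))) :=
          volume_mul_volume_polarSet_le hcore.1 (setIntegral_id_eq_zero_of_neg_eq (neg_inter_neg K))
            hK.sub_self (neg_sub_self K)
      _ ≤ (16 * Real.exp 3) ^ d * ((c ^ d * volume.real (K ∩ -K)) *
            volume.real (_root_.polarSet K ∩ -_root_.polarSet K)) := by
          gcongr
      _ = _ := by
          simp only [mul_pow]
          ring
  refine ⟨hpolar, ?_⟩
  calc volume.real (_root_.polarSet K - _root_.polarSet K)
      ≤ volume.real ((2 : ℝ) • _root_.polarSet (K ∩ -K)) :=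
        volume_real_mono (hcore.polarSet.smul two_pos).1.1 (polarSet_sub_polarSet_subset hK)
    _ = 2 ^ d * volume.real (_root_.polarSet (K ∩ -K)) := volume_real_smul zero_le_two _
    _ ≤ 2 ^ d * ((16 * Real.exp 3 * c) ^ d *
          volume.real (_root_.polarSet K ∩ -_root_.polarSet K)) := by
        gcongr
        exact le_of_mul_le_mul_left hproduct hcore.1.volume_real_pos
    _ = _ := by
        rw [show (32 : ℝ) = 2 * 16 by norm_num]
        simp only [mul_pow]
        ring

lemma disjoint_vadd_smul_neg {E : Type*} [AddCommGroup E] [Module ℝ E] {K : Set E}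
    (hK : Convex ℝ K) {s : ℝ} (hs0 : 0 < s) (hs1 : s ≤ 1) {x : E}
    (hx : -x ∉ ((2 - s) / s) • K) : Disjoint (s • x +ᵥ (1 - s) • K) (-K) := by
  refine disjoint_left.2 ?_
  rintro _ ⟨_, ⟨k, hk, rfl⟩, rfl⟩ hmem
  have hdecomp : s • -x ∈ (2 - s) • K := by
    rw [show 2 - s = 1 + (1 - s) by ring, hK.add_smul zero_le_one (by linarith), one_smul]
    refine ⟨_, hmem, _, ⟨k, hk, rfl⟩, ?_⟩
    simp only [vadd_eq_add, smul_neg]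
    abel
  refine hx ?_
  rw [div_eq_inv_mul, mul_smul, mem_smul_set_iff_inv_smul_mem₀ (inv_ne_zero hs0.ne'), inv_inv]
  exact hdecomp

/-- `K` contains, disjointly, `K ∩ -K` and its own copy shrunk by `1 - s` towards `x`. -/
lemma volume_inter_neg_le (hK : IsConvexBodyAboutZero K) {s : ℝ} (hs0 : 0 < s) (hs1 : s ≤ 1)
    {x : Euc d} (hx : x ∈ K) (hxneg : -x ∉ ((2 - s) / s) • K) :
    volume.real (K ∩ -K) ≤ d * s * volume.real K := by
  have hcore := hK.inter_neg.1.1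
  have hshrunk : IsCompact (s • x +ᵥ (1 - s) • K) := (hK.1.1.smul (1 - s)).vadd (s • x)
  have hsub : (s • x +ᵥ (1 - s) • K) ⊆ K := by
    rintro _ ⟨_, ⟨k, hk, rfl⟩, rfl⟩
    exact hK.1.2.1 hx hk hs0.le (by linarith) (by ring)
  have hdisj : Disjoint (s • x +ᵥ (1 - s) • K) (K ∩ -K) :=
    (disjoint_vadd_smul_neg hK.1.2.1 hs0 hs1 hxneg).mono_right inter_subset_right
  have hle : volume.real (s • x +ᵥ (1 - s) • K) + volume.real (K ∩ -K) ≤ volume.real K := by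
    rw [← measureReal_union hdisj hcore.measurableSet hshrunk.measure_ne_top hcore.measure_ne_top]
    exact volume_real_mono hK.1.1 (union_subset hsub inter_subset_left)
  rw [measureReal_vadd_set, volume_real_smul (by linarith)] at hle
  have hbernoulli : 1 - d * s ≤ (1 - s) ^ d := by
    simpa [sub_eq_add_neg] using one_add_mul_le_pow (a := -s) (by linarith) d
  linarith [mul_le_mul_of_nonneg_right hbernoulli hK.1.volume_real_pos.le]

lemma IsAlmostSymmetric.neg_mem_smul (hK : IsAlmostSymmetric c K) (hd : 1 ≤ d) (hc : 1 ≤ c)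
    {x : Euc d} (hx : x ∈ K) : -x ∈ (2 * d * c ^ d) • K := by
  set M : ℝ := 2 * d * c ^ d with hM
  have hd1 : (1 : ℝ) ≤ d := by exact_mod_cast hd
  have hM1 : 1 ≤ M := by linarith [one_le_mul_of_one_le_of_one_le hd1 (one_le_pow₀ hc (n := d))]
  have hratio : (2 - 2 / (1 + M)) / (2 / (1 + M)) = M := by
    field_simp
    ring
  by_contra hcon
  have hvol : volume.real (K ∩ -K) ≤ M / (1 + M) * volume.real (K ∩ -K) := by
    calc volume.real (K ∩ -K) ≤ d * (2 / (1 + M)) * volume.real K :=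
          volume_inter_neg_le hK.1 (by positivity) ((div_le_one (by positivity)).2 (by linarith))
            hx (hratio.symm ▸ hcon)
      _ ≤ d * (2 / (1 + M)) * (c ^ d * volume.real (K ∩ -K)) := by
          gcongr
          exact (volume_real_mono hK.1.sub_self.1.1 hK.1.subset_sub_self).trans hK.2
      _ = M / (1 + M) * volume.real (K ∩ -K) := by
          rw [hM]
          ring
  have hlt : M / (1 + M) < 1 := (div_lt_one (by positivity)).2 (by linarith)
  exact hvol.not_gt (mul_lt_of_lt_one_left hK.1.inter_neg.1.volume_real_pos hlt)

end AlmostSymmetric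

/-! ### Coverings -/

section Covering

variable {d : ℕ} {A B C D E U : Set (Euc d)}

lemma exists_finset_cover_card_mul_volume_le (hU : Bornology.IsBounded U)
    (hE : IsConvexBodyAboutZero E) (hneg : -E = E) :
    ∃ F : Finset (Euc d), U ⊆ ↑F + E ∧
      F.card * volume.real ((2⁻¹ : ℝ) • E) ≤ volume.real (U + (2⁻¹ : ℝ) • E) := by
  have hhalf : IsConvexBodyAboutZero ((2⁻¹ : ℝ) • E) := hE.smul (by norm_num)
  have hfin : volume (U + (2⁻¹ : ℝ) • E) ≠ ∞ :=
    (hU.add hhalf.1.1.isBounded).measure_lt_top.ne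
  have hpacking : ∀ F : Finset (Euc d), ↑F ⊆ U → (F : Set (Euc d)).Pairwise (fun x y => x - y ∉ E) →
      F.card * volume.real ((2⁻¹ : ℝ) • E) ≤ volume.real (U + (2⁻¹ : ℝ) • E) :=
    fun F hFU hF => card_mul_measureReal_le_of_pairwiseDisjoint hhalf.1.1.measurableSet hFU hfin
      (pairwiseDisjoint_vadd_half_smul hE.1.2.1 hneg hF)
  obtain ⟨F, hFU, hF, hcover⟩ := exists_finset_maximal_separated (U := U) hE.zero_mem hneg
    fun F hFU hF => Nat.le_floor ((le_div_iff₀ hhalf.1.volume_real_pos).2 (hpacking F hFU hF))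
  exact ⟨F, hcover, hpacking F hFU hF⟩

lemma exists_sub_smul_mem_frontier (hA : IsConvexBodyAboutZero A) {M r : ℝ} (hM : 0 ≤ M)
    (hr : 0 ≤ r) {a p : Euc d} (ha : a ∈ A) (hp : r • p ∈ frontier A)
    (hneg : ∀ x ∈ A, -x ∈ M • A) : ∃ t ∈ Icc 0 ((2 + M) * r), a - t • p ∈ frontier A := by
  have hcont : Continuous fun t : ℝ => gauge A (a - t • p) :=
    (continuous_gauge hA.1.2.1 hA.mem_nhds).comp (by fun_prop)
  have hstart : gauge A (a - (0 : ℝ) • p) ≤ 1 := by simpa using hA.gauge_le_one_iff.2 ha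
  have hend : 1 ≤ gauge A (a - ((2 + M) * r) • p) := by
    by_contra! hlt
    have hneg_le := gauge_le_of_mem hM (hneg _ (hA.gauge_le_one_iff.1 hlt.le))
    have hadd := gauge_add_le hA.1.2.1 (absorbent_nhds_zero hA.mem_nhds) a
      (-(a - ((2 + M) * r) • p))
    rw [neg_sub, add_sub_cancel, mul_smul, gauge_smul_of_nonneg (by positivity),
      hA.gauge_eq_one_iff.2 hp, smul_eq_mul, mul_one, ← mul_smul, ← neg_sub a] at hadd
    linarith [hA.gauge_le_one_iff.2 ha]
  obtain ⟨t, ht, hgauge⟩ := intermediate_value_Icc (by positivity) hcont.continuousOn ⟨hstart, hend⟩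
  exact ⟨t, ht, hA.gauge_eq_one_iff.1 hgauge⟩

/-- Every point of `A` is pushed to the frontier along `-p`; the integer parts of the travel times
give the new centers. -/
lemma exists_finset_cover_of_frontier_cover (hA : IsConvexBodyAboutZero A)
    (hB : IsConvexBodyAboutZero B) {M r : ℝ} (hM : 0 ≤ M) (hr : 0 ≤ r) {p : Euc d} (hpB : p ∈ B)
    (hp : r • p ∈ frontier A) (hneg : ∀ x ∈ A, -x ∈ M • A) (F : Finset (Euc d))
    (hF : frontier A ⊆ ↑F + B) :
    ∃ F' : Finset (Euc d), A ⊆ ↑F' + (2 : ℝ) • B ∧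
      (F'.card : ℝ) ≤ ((2 + M) * r + 1) * F.card := by
  classical
  set n := ⌊(2 + M) * r⌋₊ + 1
  refine ⟨(F ×ˢ Finset.range n).image fun q => q.1 + (q.2 : ℝ) • p, fun a ha => ?_, ?_⟩
  · obtain ⟨t, ht, hfrontier⟩ := exists_sub_smul_mem_frontier hA hM hr ha hp hneg
    obtain ⟨f, hf, q, hq, hfq⟩ := hF hfrontier
    have hfract : (t - ⌊t⌋₊) • p ∈ B := hB.1.2.1.smul_mem_of_zero_mem hB.zero_mem hpB
      ⟨sub_nonneg.2 (Nat.floor_le ht.1), by linarith [Nat.lt_floor_add_one t]⟩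
    refine ⟨f + (⌊t⌋₊ : ℝ) • p, ?_, q + (t - ⌊t⌋₊) • p, ?_, ?_⟩
    · rw [Finset.mem_coe, Finset.mem_image]
      exact ⟨(f, ⌊t⌋₊), Finset.mem_product.2
        ⟨hf, Finset.mem_range.2 (Nat.lt_succ_of_le (Nat.floor_le_floor ht.2))⟩, rfl⟩
    · have hdouble : (2 : ℝ) • B = B + B := by
        simpa [one_add_one_eq_two] using hB.1.2.1.add_smul (zero_le_one' ℝ) zero_le_one
      exact hdouble ▸ add_mem_add hq hfract
    · calc f + (⌊t⌋₊ : ℝ) • p + (q + (t - ⌊t⌋₊) • p) = (f + q) + t • p := by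
            rw [sub_smul]
            abel
        _ = a := by rw [show f + q = a - t • p from hfq, sub_add_cancel]
  · calc (((F ×ˢ Finset.range n).image fun q => q.1 + (q.2 : ℝ) • p).card : ℝ)
        ≤ ((F.card * n : ℕ) : ℝ) := by
          rw [Nat.cast_le, ← Finset.card_range n, ← Finset.card_product, Finset.card_range]
          exact Finset.card_image_le
      _ = (⌊(2 + M) * r⌋₊ + 1) * F.card := by
          push_cast [n]
          ring
      _ ≤ ((2 + M) * r + 1) * F.card := by
          gcongr
          exact Nat.floor_le (by positivity)

lemma one_add_pow_sub_one_sub_pow_le {ε : ℝ} (h0 : 0 ≤ ε) (h1 : ε ≤ 1) (n : ℕ) :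
    (1 + ε) ^ n - (1 - ε) ^ n ≤ 4 ^ n * ε := by
  induction n with
  | zero => simpa using h0
  | succ n ih =>
    have hplus : (1 + ε) ^ n ≤ 4 ^ n := pow_le_pow_left₀ (by linarith) (by linarith) n
    have hminus : (1 - ε) ^ n ≤ 4 ^ n := pow_le_pow_left₀ (by linarith) (by linarith) n
    calc (1 + ε) ^ (n + 1) - (1 - ε) ^ (n + 1)
        = ((1 + ε) ^ n - (1 - ε) ^ n) + ε * ((1 + ε) ^ n + (1 - ε) ^ n) := by ring
      _ ≤ 4 ^ n * ε + ε * (4 ^ n + 4 ^ n) := by gcongr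
      _ ≤ 4 ^ (n + 1) * ε := by
        have : 0 ≤ (4 : ℝ) ^ n * ε := by positivity
        rw [pow_succ]
        linarith

lemma frontier_add_smul_subset_sdiff (hC : IsConvexBodyAboutZero C) {ε : ℝ} (h0 : 0 ≤ ε)
    (h1 : ε ≤ 1) :
    frontier C + ε • (C ∩ -C) ⊆ ((1 + ε) • C) \ interior ((1 - ε) • C) := by
  rintro _ ⟨a, ha, _, ⟨z, ⟨hz, hz'⟩, rfl⟩, rfl⟩
  refine ⟨?_, fun hinterior => ha.2 ?_⟩
  · rw [hC.1.2.1.add_smul zero_le_one h0, one_smul]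
    exact ⟨a, hC.1.1.isClosed.frontier_subset ha, ε • z, ⟨z, hz, rfl⟩, rfl⟩
  · have hsplit : (1 - ε) • C + ε • C ⊆ C :=
      convex_iff_pointwise_add_subset.1 hC.1.2.1 (sub_nonneg.2 h1) h0 (sub_add_cancel 1 ε)
    refine interior_maximal ((add_subset_add_right interior_subset).trans hsplit)
      isOpen_interior.add_right ⟨_, hinterior, ε • (-z), ⟨-z, hz', rfl⟩, ?_⟩
    simp

lemma volume_frontier_add_smul_le (hC : IsConvexBodyAboutZero C) {ε : ℝ} (h0 : 0 < ε)
    (h1 : ε < 1) :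
    volume.real (frontier C + ε • (C ∩ -C)) ≤ 4 ^ d * ε * volume.real C := by
  have houter : IsConvexBodyAboutZero ((1 + ε) • C) := hC.smul (by linarith)
  have hinner : IsConvexBodyAboutZero ((1 - ε) • C) := hC.smul (by linarith)
  have hsub : interior ((1 - ε) • C) ⊆ (1 + ε) • C := by
    refine interior_subset.trans ?_
    rw [show 1 - ε = (1 + ε) * ((1 - ε) / (1 + ε)) by field_simp, mul_smul]
    exact smul_set_mono (hC.smul_subset (div_nonneg (by linarith) (by linarith))
      ((div_le_one (by linarith)).2 (by linarith)))
  calc volume.real (frontier C + ε • (C ∩ -C))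
      ≤ volume.real (((1 + ε) • C) \ interior ((1 - ε) • C)) :=
        measureReal_mono (frontier_add_smul_subset_sdiff hC h0.le h1.le)
          (measure_ne_top_of_subset sdiff_subset houter.1.1.measure_ne_top)
    _ = volume.real ((1 + ε) • C) - volume.real ((1 - ε) • C) := by
        rw [measureReal_sdiff hsub measurableSet_interior houter.1.1.measure_ne_top,
          measureReal_def _ (interior _),
          measure_interior_of_null_frontier (hinner.1.2.1.addHaar_frontier volume),
          ← measureReal_def]
    _ = ((1 + ε) ^ d - (1 - ε) ^ d) * volume.real C := by
        rw [volume_real_smul (by linarith), volume_real_smul (by linarith), sub_mul]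
    _ ≤ 4 ^ d * ε * volume.real C := by
        gcongr
        exact one_add_pow_sub_one_sub_pow_le h0.le h1.le d

lemma volume_frontier_add_mul_max_le (hC : IsConvexBodyAboutZero C) (hD : IsConvexBodyAboutZero D)
    {r : ℝ} (hr : 0 < r) (hDC : r • D ⊆ C) :
    volume.real (frontier C + (2⁻¹ : ℝ) • (D ∩ -D)) * max 1 r ≤
      4 ^ d * volume.real ((C - C) + (D - D)) := by
  have hsum := hC.sub_self.add hD.sub_self
  have hfrontier : frontier C ⊆ C := hC.1.1.isClosed.frontier_subset
  rcases le_total r 1 with h | h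
  · have hsub : frontier C + (2⁻¹ : ℝ) • (D ∩ -D) ⊆ (C - C) + (D - D) :=
      add_subset_add (hfrontier.trans hC.subset_sub_self)
        (((hD.inter_neg.smul_subset (by norm_num) (by norm_num)).trans inter_subset_left).trans
          hD.subset_sub_self)
    rw [max_eq_left h, mul_one]
    exact (volume_real_mono hsum.1.1 hsub).trans
      (le_mul_of_one_le_left measureReal_nonneg (one_le_pow₀ (by norm_num)))
  · have hcore : r • (D ∩ -D) ⊆ C ∩ -C := by
      rw [smul_set_inter₀ hr.ne', smul_set_neg]
      exact inter_subset_inter hDC (neg_subset_neg.2 hDC)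
    have hsub : frontier C + (2⁻¹ : ℝ) • (D ∩ -D) ⊆ frontier C + (2 * r)⁻¹ • (C ∩ -C) := by
      rw [show (2⁻¹ : ℝ) = (2 * r)⁻¹ * r by field_simp, mul_smul]
      exact add_subset_add_left (smul_set_mono hcore)
    have hbounded : IsCompact (frontier C + (2 * r)⁻¹ • (C ∩ -C)) :=
      (hC.1.1.of_isClosed_subset isClosed_frontier hfrontier).add (hC.inter_neg.1.1.smul _)
    have hshell := volume_frontier_add_smul_le hC (inv_pos.2 (by positivity : 0 < 2 * r))
      (inv_lt_one_of_one_lt₀ (by linarith))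
    rw [max_eq_right h]
    calc volume.real (frontier C + (2⁻¹ : ℝ) • (D ∩ -D)) * r
        ≤ 4 ^ d * (2 * r)⁻¹ * volume.real C * r := by
          gcongr
          exact (volume_real_mono hbounded hsub).trans hshell
      _ = 4 ^ d * (2⁻¹ * volume.real C) := by field_simp
      _ ≤ 4 ^ d * volume.real ((C - C) + (D - D)) := by
          gcongr
          have hCsum := volume_real_mono hsum.1.1
            (hC.subset_sub_self.trans (hD.sub_self.subset_add_right _))
          linarith [hC.1.volume_real_pos]

lemma polarSet_inter_sub_self_subset_add (hC : IsConvexBodyAboutZero C)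
    (hD : IsConvexBodyAboutZero D) {F : Set (Euc d)}
    (hF : polarSet D ⊆ F + (2 : ℝ) • polarSet C) :
    polarSet ((C - C) ∩ (D - D)) ⊆ F + (3 : ℝ) • polarSet C := by
  calc polarSet ((C - C) ∩ (D - D)) ⊆ polarSet (C ∩ D) := polarSet_antitone
        (inter_subset_inter hC.subset_sub_self hD.subset_sub_self)
    _ ⊆ polarSet D + polarSet C := by
        rw [inter_comm]
        exact polarSet_inter_subset_add hD hC
    _ ⊆ F + (2 : ℝ) • polarSet C + polarSet C := add_subset_add_right hF
    _ = F + (3 : ℝ) • polarSet C := by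
        rw [add_assoc, show (3 : ℝ) = 2 + 1 by norm_num,
          hC.polarSet.1.2.1.add_smul zero_le_two zero_le_one, one_smul]

/-- The volume product turns an upper bound for the volume of the polar of `(C - C) ∩ (D - D)` into
a lower bound for its own volume. -/
lemma volume_inter_neg_le_card_mul_volume_inter_sub_self (hC : IsConvexBodyAboutZero C)
    (hD : IsConvexBodyAboutZero D) (F : Finset (Euc d))
    (hF : polarSet D ⊆ ↑F + (2 : ℝ) • polarSet C) :
    volume.real (C ∩ -C) ≤
      (48 * Real.exp 3) ^ d * F.card * volume.real ((C - C) ∩ (D - D)) := by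
  set I := (C - C) ∩ (D - D)
  have hI : IsConvexBodyAboutZero I := hC.sub_self.inter hD.sub_self
  have hIneg : -I = I := by rw [Set.inter_neg, neg_sub_self, neg_sub_self]
  have hcore := hC.inter_neg
  have hpolarI : volume.real (polarSet I) ≤ F.card * (3 ^ d * volume.real (polarSet C)) := by
    rw [← volume_real_smul zero_le_three]
    exact measureReal_le_card_mul_of_subset_add
      (hC.polarSet.smul three_pos).1.1.measure_ne_top
      (polarSet_inter_sub_self_subset_add hC hD hF)
  refine le_of_mul_le_mul_right ?_ hC.polarSet.1.volume_real_pos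
  calc volume.real (C ∩ -C) * volume.real (polarSet C)
      ≤ volume.real (C ∩ -C) * volume.real (polarSet (C ∩ -C)) := by
        gcongr
        · exact hcore.polarSet.1.1.measure_ne_top
        · exact polarSet_antitone inter_subset_left
    _ ≤ (16 * Real.exp 3) ^ d * (volume.real I * volume.real (polarSet I)) :=
        volume_mul_volume_polarSet_le hcore.1
          (setIntegral_id_eq_zero_of_neg_eq (neg_inter_neg C)) hI hIneg
    _ ≤ (16 * Real.exp 3) ^ d *
          (volume.real I * (F.card * (3 ^ d * volume.real (polarSet C)))) := by gcongr
    _ = _ := by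
        rw [show (48 : ℝ) = 16 * 3 by norm_num]
        simp only [mul_pow]
        ring

lemma volume_sub_self_add_sub_self_le {c : ℝ} (hC : IsAlmostSymmetric c C)
    (hD : IsAlmostSymmetric c D) (hc : 0 ≤ c) (F : Finset (Euc d))
    (hF : polarSet D ⊆ ↑F + (2 : ℝ) • polarSet C) :
    volume.real ((C - C) + (D - D)) ≤
      (192 * Real.exp 3 * c ^ 2) ^ d * F.card * volume.real (D ∩ -D) := by
  set I := (C - C) ∩ (D - D)
  have hI : IsConvexBodyAboutZero I := hC.1.sub_self.inter hD.1.sub_self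
  have hIneg : -I = I := by rw [Set.inter_neg, neg_sub_self, neg_sub_self]
  have hcore := volume_inter_neg_le_card_mul_volume_inter_sub_self hC.1 hD.1 F hF
  refine le_of_mul_le_mul_right ?_ hI.1.volume_real_pos
  calc volume.real ((C - C) + (D - D)) * volume.real I
      ≤ 4 ^ d * (volume.real (C - C) * volume.real (D - D)) :=
        volume_add_mul_volume_le hC.1.sub_self.1.1 hD.1.sub_self.1.1 hC.1.sub_self.1.2.1
          hD.1.sub_self.1.2.1 inter_subset_left (hIneg.trans_subset inter_subset_right)
    _ ≤ 4 ^ d * ((c ^ d * ((48 * Real.exp 3) ^ d * F.card * volume.real I)) *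
          (c ^ d * volume.real (D ∩ -D))) := by
        gcongr
        · exact hC.2.trans (by gcongr)
        · exact hD.2
    _ = _ := by
        rw [show (192 : ℝ) = 4 * 48 by norm_num]
        simp only [mul_pow, ← pow_mul]
        ring

end Covering

section Duality

variable {d : ℕ} {A B C D U : Set (Euc d)} {c α : ℝ}

lemma exists_smul_mem_frontier_and_smul_subset [Nontrivial (Euc d)]
    (hA : IsConvexBodyAboutZero A) (hB : IsConvexBodyAboutZero B) :
    ∃ r : ℝ, 0 < r ∧ ∃ p ∈ A, r • p ∈ frontier B ∧ r • A ⊆ B := by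
  obtain ⟨p, hp, hmax⟩ := hA.1.1.exists_isMaxOn ⟨0, hA.zero_mem⟩
    (continuous_gauge hB.1.2.1 hB.mem_nhds).continuousOn
  have hgauge : 0 < gauge B p := by
    obtain ⟨q, hq, hq0⟩ := (infinite_of_mem_nhds (0 : Euc d) hA.mem_nhds).nontrivial.exists_ne 0
    exact (hB.gauge_pos hq0).trans_le (hmax hq)
  refine ⟨(gauge B p)⁻¹, inv_pos.2 hgauge, p, hp, ?_, ?_⟩
  · rw [← hB.gauge_eq_one_iff, gauge_smul_of_nonneg (inv_pos.2 hgauge).le, smul_eq_mul,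
      inv_mul_cancel₀ hgauge.ne']
  · rintro _ ⟨x, hx, rfl⟩
    rw [← hB.gauge_le_one_iff, gauge_smul_of_nonneg (inv_pos.2 hgauge).le, smul_eq_mul,
      inv_mul_le_one₀ hgauge]
    exact hmax hx

lemma smul_subset_of_smul_polarSet_subset (hC : IsConvexBodyAboutZero C)
    (hD : IsConvexBodyAboutZero D) {r : ℝ} (hr : 0 < r) (h : r • polarSet C ⊆ polarSet D) :
    r • D ⊆ C := by
  have hpolar := polarSet_antitone h
  rw [polarSet_smul hr, hC.polarSet_polarSet, hD.polarSet_polarSet] at hpolar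
  simpa only [smul_inv_smul₀ hr.ne'] using smul_set_mono (a := r) hpolar

lemma add_mul_add_one_le_pow_mul_max (hd : 1 ≤ d) (hc : 1 ≤ c) (r : ℝ) :
    (2 + 2 * d * c ^ d) * r + 1 ≤ (10 * c) ^ d * max 1 r := by
  have hd2 : (d : ℝ) ≤ 2 ^ d := by exact_mod_cast Nat.lt_two_pow_self.le
  have hd5 : (5 : ℝ) ≤ 5 ^ d := le_self_pow₀ (by norm_num) (by omega)
  have hone : 1 ≤ (d : ℝ) * c ^ d :=
    one_le_mul_of_one_le_of_one_le (by exact_mod_cast hd) (one_le_pow₀ hc)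
  calc (2 + 2 * d * c ^ d) * r + 1 ≤ (2 + 2 * d * c ^ d) * max 1 r + max 1 r := by
        gcongr
        · exact le_max_right 1 r
        · exact le_max_left 1 r
    _ = (3 + 2 * (d * c ^ d)) * max 1 r := by ring
    _ ≤ 5 * (d * c ^ d) * max 1 r := by gcongr; linarith
    _ ≤ 5 ^ d * (2 ^ d * c ^ d) * max 1 r := by gcongr
    _ = (10 * c) ^ d * max 1 r := by
        rw [← mul_pow, ← mul_pow]
        ring_nf

/-- The base of the exponential factor that is lost when a cover of the boundary of a polar body is
traded for a cover of the boundary of the other body, for bodies with `IsAlmostSymmetric c`. -/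
def frontierCoverConst (c : ℝ) : ℝ :=
  (1536 * Real.exp 3 * c ^ 2) * (320 * Real.exp 3 * c)

lemma one_le_frontierCoverConst (hc : 1 ≤ c) : 1 ≤ frontierCoverConst c := by
  have hexp : 1 ≤ Real.exp 3 := Real.one_le_exp (by norm_num)
  exact one_le_mul_of_one_le_of_one_le
    (one_le_mul_of_one_le_of_one_le (by linarith) (one_le_pow₀ hc))
    (one_le_mul_of_one_le_of_one_le (by linarith) hc)

/-- A cover of `frontier (polarSet D)` gives a cover of `polarSet D` and hence a bound for the
volume of `(C - C) + (D - D)`. Since a maximal separated subset of `frontier C` is counted by the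
volume of a neighbourhood of `frontier C`, the ratio `r` of the two bodies cancels. -/
lemma exists_finset_frontier_cover (hC : IsAlmostSymmetric c C)
    (hD : IsAlmostSymmetric c D) (hd : 1 ≤ d) (hc : 1 ≤ c) (F : Finset (Euc d))
    (hF : frontier (polarSet D) ⊆ ↑F + polarSet C) :
    ∃ F' : Finset (Euc d), frontier C ⊆ ↑F' + D ∧
      (F'.card : ℝ) ≤ frontierCoverConst c ^ d * F.card := by
  have : Nonempty (Fin d) := ⟨⟨0, hd⟩⟩
  set c' : ℝ := 32 * Real.exp 3 * c with hc'
  have hc'1 : 1 ≤ c' := one_le_mul_of_one_le_of_one_le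
    (by linarith [Real.one_le_exp zero_le_three]) hc
  obtain ⟨r, hr, p, hp, hrp, hpolar⟩ :=
    exists_smul_mem_frontier_and_smul_subset hC.1.polarSet hD.1.polarSet
  have hrDC := smul_subset_of_smul_polarSet_subset hC.1 hD.1 hr hpolar
  obtain ⟨F₁, hF₁, hF₁card⟩ := exists_finset_cover_of_frontier_cover hD.1.polarSet hC.1.polarSet
    (M := 2 * d * c' ^ d) (by positivity) hr.le hp hrp
    (fun x hx => (hD.polarSet (by linarith)).neg_mem_smul hd hc'1 hx) F hF
  obtain ⟨F', hF', hF'card⟩ := exists_finset_cover_card_mul_volume_le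
    (hC.1.1.1.of_isClosed_subset isClosed_frontier hC.1.1.1.isClosed.frontier_subset).isBounded
    hD.1.inter_neg (neg_inter_neg D)
  refine ⟨F', hF'.trans (add_subset_add_left inter_subset_left), ?_⟩
  rw [volume_real_smul (by norm_num)] at hF'card
  have hpos : 0 < (2⁻¹ : ℝ) ^ d * volume.real (D ∩ -D) * max 1 r := by
    have := hD.1.inter_neg.1.volume_real_pos
    positivity
  refine le_of_mul_le_mul_right ?_ hpos
  calc (F'.card : ℝ) * (2⁻¹ ^ d * volume.real (D ∩ -D) * max 1 r)
      = F'.card * (2⁻¹ ^ d * volume.real (D ∩ -D)) * max 1 r := by ring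
    _ ≤ volume.real (frontier C + (2⁻¹ : ℝ) • (D ∩ -D)) * max 1 r := by gcongr
    _ ≤ 4 ^ d * volume.real ((C - C) + (D - D)) := volume_frontier_add_mul_max_le hC.1 hD.1 hr hrDC
    _ ≤ 4 ^ d * ((192 * Real.exp 3 * c ^ 2) ^ d * F₁.card * volume.real (D ∩ -D)) := by
        gcongr
        exact volume_sub_self_add_sub_self_le hC hD (by linarith) F₁ hF₁
    _ ≤ 4 ^ d * ((192 * Real.exp 3 * c ^ 2) ^ d * ((10 * c') ^ d * max 1 r * F.card) *
          volume.real (D ∩ -D)) := by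
        gcongr
        exact hF₁card.trans (by gcongr; exact add_mul_add_one_le_pow_mul_max hd hc'1 r)
    _ = _ := by
        rw [frontierCoverConst, show (1536 : ℝ) = 2 * 4 * 192 by norm_num, hc']
        simp only [mul_pow, inv_pow]
        rw [show (320 : ℝ) = 10 * 32 by norm_num, mul_pow]
        field_simp

lemma exists_fin_cover_of_finset_cover (F : Finset (Euc d)) (hF : U ⊆ ↑F + D) :
    ∃ x : Fin F.card → Euc d, U ⊆ ⋃ i, x i +ᵥ D := by
  refine ⟨fun i => F.equivFin.symm i, fun u hu => ?_⟩
  obtain ⟨x, hx, y, hy, rfl⟩ := hF hu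
  exact mem_iUnion.2 ⟨F.equivFin ⟨x, hx⟩, y, hy, by simp⟩

lemma transCov_le_card (F : Finset (Euc d)) (hF : U ⊆ ↑F + α • D) : transCov D U α ≤ F.card :=
  Nat.sInf_le (exists_fin_cover_of_finset_cover F hF)

lemma exists_finset_card_le_transCov (hD : IsConvexBodyAboutZero D) (hα : 0 < α)
    (hU : Bornology.IsBounded U) :
    ∃ F : Finset (Euc d), F.card ≤ transCov D U α ∧ U ⊆ ↑F + α • D := by
  classical
  have hD' := hD.smul hα
  obtain ⟨F, hF, -⟩ := exists_finset_cover_card_mul_volume_le hU hD'.inter_neg (neg_inter_neg _)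
  obtain ⟨x, hx⟩ := Nat.sInf_mem (s := {m : ℕ | ∃ x : Fin m → Euc d, U ⊆ ⋃ i, x i +ᵥ α • D})
    ⟨F.card, exists_fin_cover_of_finset_cover F (hF.trans (add_subset_add_left inter_subset_left))⟩
  refine ⟨Finset.univ.image x, Finset.card_image_le.trans (Finset.card_fin _).le, fun u hu => ?_⟩
  obtain ⟨i, y, hy, rfl⟩ := mem_iUnion.1 (hx hu)
  exact ⟨x i, by simp, y, hy, rfl⟩

lemma transCov_frontier_le (hC : IsAlmostSymmetric c C) (hD : IsAlmostSymmetric c D) (hd : 1 ≤ d)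
    (hc : 1 ≤ c) (hα : 0 < α) :
    (transCov D (frontier C) α : ℝ) ≤
      frontierCoverConst c ^ d * transCov (polarSet C) (frontier (polarSet D)) α := by
  classical
  obtain ⟨F, hFcard, hF⟩ := exists_finset_card_le_transCov hC.1.polarSet hα
    (hD.1.polarSet.1.1.isBounded.subset hD.1.polarSet.1.1.isClosed.frontier_subset)
  have hscaled : frontier (polarSet (α • D)) ⊆ ↑(α⁻¹ • F) + polarSet C := by
    calc frontier (polarSet (α • D)) = α⁻¹ • frontier (polarSet D) := by
          rw [polarSet_smul hα]
          exact ((Homeomorph.smulOfNeZero α⁻¹ (inv_ne_zero hα.ne')).image_frontier _).symm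
      _ ⊆ α⁻¹ • (↑F + α • polarSet C) := smul_set_mono hF
      _ = ↑(α⁻¹ • F) + polarSet C := by
          rw [smul_add, inv_smul_smul₀ hα.ne', Finset.coe_smul_finset]
  obtain ⟨F', hF', hF'card⟩ := exists_finset_frontier_cover hC (hD.smul hα) hd hc _ hscaled
  calc (transCov D (frontier C) α : ℝ) ≤ F'.card := by exact_mod_cast transCov_le_card F' hF'
    _ ≤ frontierCoverConst c ^ d * (α⁻¹ • F).card := hF'card
    _ ≤ frontierCoverConst c ^ d * transCov (polarSet C) (frontier (polarSet D)) α := by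
        have := one_le_frontierCoverConst hc
        gcongr
        exact Finset.card_smul_finset_le.trans hFcard

end Duality

/-- Duality for boundary coverings by translates of centered bodies. -/
theorem mink_boundary_cover_duality :
    ∃ c : ℝ, 1 ≤ c ∧ ∀ d : ℕ, 2 ≤ d →
      ∀ C D : Set (Euc d), IsConvexBody C → IsConvexBody D →
        (∫ x in C, x) = 0 → (∫ x in D, x) = 0 →
        ∀ α : ℝ, 0 < α →
          (c ^ d)⁻¹ * (transCov (polarSet C) (frontier (polarSet D)) α : ℝ) ≤
              (transCov D (frontier C) α : ℝ) ∧
          (transCov D (frontier C) α : ℝ) ≤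
              c ^ d * (transCov (polarSet C) (frontier (polarSet D)) α : ℝ) := by
  have hexp : 1 ≤ Real.exp 3 := Real.one_le_exp (by norm_num)
  have hbody : 1 ≤ 256 * Real.exp 3 := by linarith
  have hpolar : 256 * Real.exp 3 ≤ 32 * Real.exp 3 * (256 * Real.exp 3) :=
    le_mul_of_one_le_left (by linarith) (by linarith)
  have hconst := one_le_frontierCoverConst (hbody.trans hpolar)
  refine ⟨_, hconst, fun d hd C D hC hD hC0 hD0 α hα => ?_⟩
  have hC' := hC.isAlmostSymmetric hC0
  have hD' := hD.isAlmostSymmetric hD0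
  constructor
  · have hdual := transCov_frontier_le (hD'.polarSet (by linarith)) (hC'.polarSet (by linarith))
      (one_le_two.trans hd) (hbody.trans hpolar) hα
    rw [hC'.1.polarSet_polarSet, hD'.1.polarSet_polarSet] at hdual
    rwa [inv_mul_le_iff₀ (by positivity)]
  · exact transCov_frontier_le (hC'.mono (by linarith) hpolar) (hD'.mono (by linarith) hpolar)
      (one_le_two.trans hd) (hbody.trans hpolar) hα
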